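/- arXiv:1707.09846 — 7 statements merged into one kernel-verified Lean document; each statement's English description precedes it below -/
import Mathlib

section
/- Let R be a finite commutative ring and let T : R[y] → R[y] be an R-linear operator such that: (1) deg T(f) < deg f for every nonzero f ∈ R[y]; (2) there exist an integer d ≥ 1 and polynomials a_1, …, a_d ∈ R[y] with deg a_i ≤ i for each i, such that T(y^n) = a_1·T(y^{n−1}) + a_2·T(y^{n−2}) + ⋯ + a_d·T(y^{n−d}) for all n ≥ d; (3) the coefficient of y^d in a_d is a unit of R. Then there exist a real number α < 1 and a constant C > 0 such that N_T(y^n) ≤ C·n^α for all n ≥ 1. -/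
open Polynomial

/-- The nilpotence index of `f` with respect to `T`: the largest `k` with `T^k f ≠ 0`. -/
noncomputable def nilpIndex {R : Type} [CommRing R]
    (T : Module.End R (Polynomial R)) (f : Polynomial R) : ℕ :=
  sSup {k : ℕ | (T ^ k) f ≠ 0}

/-- The value `∑ₗ nₗ e βˡ + r` attached to the mixed-base expansion `n = ∑ₗ nₗ e bˡ + r` with
`0 ≤ r < e`, where the digits `nₗ` with `l < k` are used and the top one may exceed `b - 1`. -/
noncomputable def digitContentAux (e b : ℕ) (β : ℝ) : ℕ → ℕ → ℝ
  | 0, n => n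
  | k + 1, n => (n / (e * b ^ k) : ℕ) * (e * β ^ k) + digitContentAux e b β k (n % (e * b ^ k))

/-- The stable value of `digitContentAux e b β k n` for large `k`. -/
noncomputable def digitContent (e b : ℕ) (β : ℝ) (n : ℕ) : ℝ := digitContentAux e b β n n

lemma digitContentAux_eq_of_le {e b : ℕ} (β : ℝ) (hb : 1 ≤ b) {k l n : ℕ} (hn : n < e * b ^ k)
    (hkl : k ≤ l) : digitContentAux e b β l n = digitContentAux e b β k n := by
  induction l, hkl using Nat.le_induction with
  | base => rfl
  | succ l hl ih =>
    have h : n < e * b ^ l := hn.trans_le (Nat.mul_le_mul_left _ (Nat.pow_le_pow_right hb hl))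
    simp [digitContentAux, Nat.div_eq_of_lt h, Nat.mod_eq_of_lt h, ih]

lemma digitContent_eq_digitContentAux {e b : ℕ} (β : ℝ) (he : 1 ≤ e) (hb : 2 ≤ b) {k n : ℕ}
    (hn : n < e * b ^ k) : digitContent e b β n = digitContentAux e b β k n := by
  have h : n < e * b ^ n := (Nat.lt_pow_self hb).trans_le (Nat.le_mul_of_pos_left _ he)
  rcases le_total k n with hk | hk
  · exact digitContentAux_eq_of_le β (by omega) hn hk
  · exact (digitContentAux_eq_of_le β (by omega) h hk).symm

lemma digitContent_add {e b : ℕ} (β : ℝ) (he : 1 ≤ e) (hb : 2 ≤ b) {k x : ℕ}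
    (hx : x + e * b ^ k < e * b ^ (k + 1)) :
    digitContent e b β (x + e * b ^ k) = digitContent e b β x + e * β ^ k := by
  have hpos : 0 < e * b ^ k := by positivity
  rw [digitContent_eq_digitContentAux β he hb hx,
    digitContent_eq_digitContentAux β he hb (lt_of_le_of_lt (Nat.le_add_right _ _) hx)]
  simp only [digitContentAux, Nat.add_div_right _ hpos, Nat.add_mod_right]
  push_cast
  ring

lemma digitContentAux_bounds {e b : ℕ} {γ ε : ℝ} (hb : 1 ≤ b) (he : 1 ≤ e) (hγ0 : 0 ≤ γ)
    (hγ1 : γ ≤ 1) (hε : 0 ≤ ε) (h : e * b * (1 - γ) ≤ ε * (γ * b - 1)) {k n : ℕ} (hn : n < e * b ^ k) :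
    n * γ ^ k ≤ digitContentAux e b (γ * b) k n ∧
      digitContentAux e b (γ * b) k n ≤ n * γ ^ k + ε * (γ * b) ^ k := by
  induction k generalizing n with
  | zero => simpa [digitContentAux] using hε
  | succ k ih =>
    have hpos : 0 < e * b ^ k := by positivity
    obtain ⟨h₁, h₂⟩ := ih (Nat.mod_lt n hpos)
    have hdiv : ((n / (e * b ^ k) : ℕ) : ℝ) * (e * b ^ k) + (n % (e * b ^ k) : ℕ) = n := by
      exact_mod_cast Nat.div_add_mod' n (e * b ^ k)
    have hn' : (n : ℝ) ≤ e * b ^ (k + 1) := by exact_mod_cast hn.le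
    have hγk : 0 ≤ γ ^ k := by positivity
    have hmul : ((n / (e * b ^ k) : ℕ) : ℝ) * (e * (γ * b) ^ k)
        = n * γ ^ k - (n % (e * b ^ k) : ℕ) * γ ^ k := by
      rw [mul_pow]
      linear_combination γ ^ k * hdiv
    simp only [digitContentAux, hmul]
    constructor
    · have : (n : ℝ) * γ ^ (k + 1) ≤ n * γ ^ k := by
        rw [pow_succ]
        exact mul_le_mul_of_nonneg_left (mul_le_of_le_one_right hγk hγ1) (by positivity)
      linarith
    · have h₃ : (n : ℝ) * (γ ^ k * (1 - γ)) ≤ e * b ^ (k + 1) * (γ ^ k * (1 - γ)) :=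
        mul_le_mul_of_nonneg_right hn' (mul_nonneg hγk (by linarith))
      have h₄ : (γ * b) ^ k * (e * b * (1 - γ)) ≤ (γ * b) ^ k * (ε * (γ * b - 1)) :=
        mul_le_mul_of_nonneg_left h (by positivity)
      have h₅ : (e : ℝ) * b ^ (k + 1) * (γ ^ k * (1 - γ)) = (γ * b) ^ k * (e * b * (1 - γ)) := by
        rw [mul_pow]; ring
      have h₆ : (n : ℝ) * γ ^ (k + 1) = n * γ ^ k - n * (γ ^ k * (1 - γ)) := by ring
      have h₇ : ε * (γ * b) ^ (k + 1) = ε * (γ * b) ^ k + (γ * b) ^ k * (ε * (γ * b - 1)) := by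
        ring
      linarith

/-- There is a function of sublinear growth that is strictly increasing along steps of size `b ^ k`
below `e * b ^ (k + 1)`, and that changes by a constant under translation by `e * b ^ k` there. -/
lemma exists_sublinear_content {e b : ℕ} (he : 1 ≤ e) (hb : 2 ≤ b) :
    ∃ (c : ℕ → ℝ) (α C : ℝ), 0 ≤ α ∧ α < 1 ∧ 0 < C ∧ (∀ n, 0 ≤ c n) ∧
      (∀ n j : ℕ, 1 ≤ n → j ≤ n → c j ≤ C * (n : ℝ) ^ α) ∧
      (∀ k n x : ℕ, n < e * b ^ (k + 1) → x + b ^ k ≤ n → c x + 1 ≤ c n) ∧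
      (∀ k : ℕ, ∃ w : ℝ, ∀ x, x + e * b ^ k < e * b ^ (k + 1) → c (x + e * b ^ k) = c x + w) := by
  have he' : (1 : ℝ) ≤ e := by exact_mod_cast he
  have hb' : (2 : ℝ) ≤ b := by exact_mod_cast hb
  obtain ⟨γ, hγ⟩ : ∃ γ : ℝ, γ = 1 - 1 / (4 * e * b ^ 2) := ⟨_, rfl⟩
  have hbb : (4 : ℝ) ≤ b ^ 2 := by nlinarith
  have hsmall : 1 / (4 * e * (b : ℝ) ^ 2) ≤ 1 / 16 :=
    one_div_le_one_div_of_le (by norm_num) (by nlinarith)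
  have hγ1 : γ < 1 := by
    have : 0 < 1 / (4 * e * (b : ℝ) ^ 2) := by positivity
    linarith
  have hγ0 : 15 / 16 ≤ γ := by linarith
  have hβ : 3 / 2 ≤ γ * b := by nlinarith
  have hβb : γ * b < b := by nlinarith
  obtain ⟨ε, hε⟩ : ∃ ε : ℝ, ε = 1 / (2 * b) := ⟨_, rfl⟩
  have hε0 : 0 ≤ ε := by rw [hε]; positivity
  have hεb : ε * b = 1 / 2 := by rw [hε]; field_simp
  have hε1 : ε ≤ 1 := by nlinarith
  have hεγ : e * b * (1 - γ) ≤ ε * (γ * b - 1) := by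
    have : e * b * (1 - γ) = ε * (1 / 2) := by
      rw [hγ, hε]; field_simp; norm_num
    rw [this]
    exact mul_le_mul_of_nonneg_left (by linarith) hε0
  have bounds : ∀ k n : ℕ, n < e * b ^ k → n * γ ^ k ≤ digitContent e b (γ * b) n ∧
      digitContent e b (γ * b) n ≤ n * γ ^ k + ε * (γ * b) ^ k := by
    intro k n hn
    rw [digitContent_eq_digitContentAux _ he hb hn]
    exact digitContentAux_bounds (by omega) he (by linarith) hγ1.le hε0 hεγ hn
  have hlogb : 0 < Real.log b := Real.log_pos (by linarith)
  have hα0 : 0 ≤ Real.log (γ * b) / Real.log b :=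
    div_nonneg (Real.log_nonneg (by linarith)) hlogb.le
  have hbα : (b : ℝ) ^ (Real.log (γ * b) / Real.log b) = γ * b := by
    rw [Real.rpow_def_of_pos (by linarith), mul_div_cancel₀ _ hlogb.ne',
      Real.exp_log (by linarith)]
  refine ⟨fun n ↦ 4 * digitContent e b (γ * b) n, Real.log (γ * b) / Real.log b,
    4 * ((e + 1) * (γ * b)), hα0, ?_, by positivity, ?_, ?_, ?_, ?_⟩
  · rw [div_lt_one hlogb]
    exact Real.log_lt_log (by linarith) hβb
  · intro n
    have h := (bounds n n
      ((Nat.lt_pow_self hb).trans_le (Nat.le_mul_of_pos_left _ he))).1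
    have : 0 ≤ n * γ ^ n := by positivity
    dsimp only
    linarith
  · intro n j hn hj
    have hlt : j < b ^ (Nat.log b n + 1) := hj.trans_lt (Nat.lt_pow_succ_log_self hb n)
    have hje : j < e * b ^ (Nat.log b n + 1) := hlt.trans_le (Nat.le_mul_of_pos_left _ he)
    have hje' : (j : ℝ) ≤ e * b ^ (Nat.log b n + 1) := by exact_mod_cast hje.le
    have hle : ((b : ℝ) ^ Nat.log b n) ≤ n := by
      exact_mod_cast Nat.pow_log_le_self b (by omega)
    have h := (bounds _ _ hje).2
    have h₁ : (j : ℝ) * γ ^ (Nat.log b n + 1) ≤ e * (γ * b) ^ (Nat.log b n + 1) := by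
      rw [mul_pow]
      calc _ ≤ e * (b : ℝ) ^ (Nat.log b n + 1) * γ ^ (Nat.log b n + 1) :=
            mul_le_mul_of_nonneg_right hje' (by positivity)
        _ = _ := by ring
    have h₂ : ε * (γ * b) ^ (Nat.log b n + 1) ≤ 1 * (γ * b) ^ (Nat.log b n + 1) :=
      mul_le_mul_of_nonneg_right hε1 (by positivity)
    have h₃ : (γ * b) ^ Nat.log b n ≤ (n : ℝ) ^ (Real.log (γ * b) / Real.log b) := by
      calc (γ * b) ^ Nat.log b n
          = ((b : ℝ) ^ Nat.log b n) ^ (Real.log (γ * b) / Real.log b) := by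
            rw [← Real.rpow_pow_comm (by positivity), hbα]
        _ ≤ _ := Real.rpow_le_rpow (by positivity) hle hα0
    have h₄ : ((e : ℝ) + 1) * (γ * b) * (γ * b) ^ Nat.log b n ≤
        (e + 1) * (γ * b) * (n : ℝ) ^ (Real.log (γ * b) / Real.log b) :=
      mul_le_mul_of_nonneg_left h₃ (by positivity)
    have h₅ : ((e : ℝ) + 1) * (γ * b) * (γ * b) ^ Nat.log b n =
      e * (γ * b) ^ (Nat.log b n + 1) + 1 * (γ * b) ^ (Nat.log b n + 1) := by ring
    dsimp only
    linarith
  · intro k n x hn hx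
    have h₁ := (bounds _ _ hn).1
    have h₂ := (bounds (k + 1) x (by omega)).2
    have hx' : (x : ℝ) + b ^ k ≤ n := by exact_mod_cast hx
    have h₃ : ((x : ℝ) + b ^ k) * γ ^ (k + 1) ≤ n * γ ^ (k + 1) :=
      mul_le_mul_of_nonneg_right hx' (by positivity)
    have h₄ : (b : ℝ) ^ k * γ ^ (k + 1) - ε * (γ * b) ^ (k + 1) = (γ * b) ^ k * (γ / 2) := by
      rw [mul_pow, mul_pow]
      linear_combination -γ ^ (k + 1) * b ^ k * hεb
    have h₅ : 1 ≤ (γ * b) ^ k := one_le_pow₀ (by linarith)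
    have h₆ : 1 / 4 ≤ (γ * b) ^ k * (γ / 2) := by nlinarith
    dsimp only
    linarith
  · refine fun k ↦ ⟨4 * (e * (γ * b) ^ k), fun x hx ↦ ?_⟩
    dsimp only
    rw [digitContent_add _ he hb hx]
    ring

/-- The span of the `s`-th powers of the bivariate monomials of total degree less than `D`. -/
noncomputable def lowerSpan (K : Type*) [CommRing K] (s D : ℕ) : Submodule K K[X][X] :=
  Submodule.span K {f | ∃ i j, i + j < D ∧ f = C (X ^ (s * j)) * X ^ (s * i)}

section
variable {K : Type*} [Field K]

lemma C_mul_X_pow_mem_lowerSpan {D i : ℕ} {u : K[X]} (hu : u.degree < i) (hi : i ≤ D) :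
    C u * X ^ (D - i) ∈ lowerSpan K 1 D := by
  rw [u.as_sum_range_C_mul_X_pow, map_sum, Finset.sum_mul]
  refine Submodule.sum_mem _ fun j hj ↦ ?_
  by_cases hj0 : u.coeff j = 0
  · simp [hj0]
  have hji : j < i := by
    exact_mod_cast (le_degree_of_ne_zero hj0).trans_lt hu
  have : C (C (u.coeff j) * X ^ j) * (X : K[X][X]) ^ (D - i)
      = u.coeff j • (C (X ^ (1 * j)) * X ^ (1 * (D - i))) := by
    rw [Algebra.smul_def, Polynomial.algebraMap_apply, algebraMap_eq, C_mul, one_mul, one_mul,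
      mul_assoc]
  rw [this]
  exact Submodule.smul_mem _ _ (Submodule.subset_span ⟨_, _, by omega, rfl⟩)

lemma mul_scaleRoots_mem_lowerSpan {D : ℕ} {L : K[X][X]} (hL : L ∈ lowerSpan K 1 D) (g : K[X]) :
    L * (g.map C).scaleRoots X ∈ lowerSpan K 1 (D + g.natDegree) := by
  rw [((g.map C).scaleRoots X).as_sum_range_C_mul_X_pow, Finset.mul_sum]
  refine Submodule.sum_mem _ fun m hm ↦ ?_
  have hm' : m ≤ g.natDegree := by
    simpa [natDegree_scaleRoots, Nat.lt_succ_iff] using hm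
  rw [coeff_scaleRoots, coeff_map, natDegree_map]
  induction hL using Submodule.span_induction with
  | mem x hx =>
    obtain ⟨i, j, hij, rfl⟩ := hx
    have : C (X ^ (1 * j)) * X ^ (1 * i) *
        (C (C (g.coeff m) * X ^ (g.natDegree - m)) * (X : K[X][X]) ^ m) =
        g.coeff m • (C (X ^ (1 * (j + (g.natDegree - m)))) * X ^ (1 * (i + m))) := by
      rw [Algebra.smul_def, Polynomial.algebraMap_apply, algebraMap_eq]
      simp only [one_mul, pow_add, C_mul]
      ring
    rw [this]
    exact Submodule.smul_mem _ _ (Submodule.subset_span ⟨_, _, by omega, rfl⟩)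
  | zero => simp
  | add x y _ _ hx hy => rw [add_mul]; exact Submodule.add_mem _ hx hy
  | smul r x _ hx => rw [smul_mul_assoc]; exact Submodule.smul_mem _ _ hx

lemma pow_mem_lowerSpan {p : ℕ} [Fact p.Prime] [CharP K p] {D : ℕ} {L : K[X][X]}
    (hL : L ∈ lowerSpan K 1 D) (m : ℕ) : L ^ p ^ m ∈ lowerSpan K (p ^ m) D := by
  have hp : p ^ m ≠ 0 := pow_ne_zero _ (Fact.out : p.Prime).ne_zero
  induction hL using Submodule.span_induction with
  | mem x hx =>
    obtain ⟨i, j, hij, rfl⟩ := hx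
    refine Submodule.subset_span ⟨i, j, hij, ?_⟩
    rw [mul_pow, ← C_pow, ← pow_mul, ← pow_mul, one_mul, one_mul, mul_comm i, mul_comm j]
  | zero => rw [zero_pow hp]; exact Submodule.zero_mem _
  | add x y _ _ hx hy => rw [add_pow_char_pow]; exact Submodule.add_mem _ hx hy
  | smul r x _ hx => rw [_root_.smul_pow]; exact Submodule.smul_mem _ _ hx

lemma exists_dvd_X_pow_sub_one [Finite K] {h : K[X]} (hm : h.Monic) (h0 : h.coeff 0 ≠ 0) :
    ∃ e, 1 ≤ e ∧ h ∣ X ^ e - 1 := by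
  have : Module.Finite K (AdjoinRoot h) := hm.finite_adjoinRoot
  have : Finite (AdjoinRoot h) := Module.finite_of_finite K
  obtain ⟨m, n, hmn, hpow⟩ := Finite.exists_ne_map_eq_of_infinite
    (fun n : ℕ ↦ AdjoinRoot.mk h (X ^ n))
  wlog hlt : m < n generalizing m n
  · exact this n m hmn.symm hpow.symm (by omega)
  refine ⟨n - m, by omega, ?_⟩
  have hdvd : h ∣ X ^ m * (X ^ (n - m) - 1) := by
    rw [mul_sub, mul_one, ← pow_add, Nat.add_sub_cancel' hlt.le]
    exact AdjoinRoot.mk_eq_mk.1 hpow.symm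
  have hcop : IsCoprime h (X ^ m) := by
    refine IsCoprime.pow_right (IsCoprime.symm ?_)
    rw [irreducible_X.coprime_iff_not_dvd, X_dvd_iff]
    exact h0
  exact hcop.dvd_of_dvd_mul_left hdvd

/-- The characteristic polynomial of the recurrence `t n = ∑ a i * t (n - i)`. -/
noncomputable def recurrencePoly (d : ℕ) (a : ℕ → K[X]) : K[X][X] :=
  X ^ d - ∑ i ∈ Finset.Icc 1 d, C (a i) * X ^ (d - i)

/-- Some multiple of the characteristic polynomial has leading form `x ^ e - y ^ e`. -/
lemma exists_recurrencePoly_mul_eq [Finite K] {d : ℕ} (hd : 1 ≤ d) {a : ℕ → K[X]}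
    (ha : ∀ i ∈ Finset.Icc 1 d, (a i).degree ≤ (i : WithBot ℕ)) (hu : (a d).coeff d ≠ 0) :
    ∃ e, 1 ≤ e ∧ ∃ G L : K[X][X], L ∈ lowerSpan K 1 e ∧
      recurrencePoly d a * G = X ^ e - C X ^ e + L := by
  set r : K[X] := ∑ i ∈ Finset.Icc 1 d, C ((a i).coeff i) * X ^ (d - i) with hr
  have hrdeg : r.degree < d := by
    refine (degree_sum_le _ _).trans_lt ((Finset.sup_lt_iff (WithBot.bot_lt_coe d)).2 fun i hi ↦ ?_)
    refine (degree_C_mul_X_pow_le _ _).trans_lt ?_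
    have := Finset.mem_Icc.1 hi
    exact Nat.cast_lt.2 (by omega)
  set h : K[X] := X ^ d - r with hh
  have hmonic : h.Monic := monic_X_pow_sub (n := d) hrdeg
  have hnat : h.natDegree = d := by
    apply natDegree_eq_of_degree_eq_some
    rw [hh, degree_sub_eq_left_of_degree_lt (by rwa [degree_X_pow]), degree_X_pow]
  have hcoeff0 : h.coeff 0 ≠ 0 := by
    have : r.coeff 0 = (a d).coeff d := by
      rw [hr, finsetSum_coeff, Finset.sum_eq_single_of_mem d (by simp [hd])]
      · simp
      · intro i hi hid
        have := Finset.mem_Icc.1 hi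
        rw [coeff_C_mul, coeff_X_pow, if_neg (by omega), mul_zero]
    rw [hh, coeff_sub, this, coeff_X_pow, if_neg (by omega), zero_sub]
    exact neg_ne_zero.2 hu
  obtain ⟨e, he, g, hg⟩ := exists_dvd_X_pow_sub_one hmonic hcoeff0
  have hg0 : g ≠ 0 := by
    rintro rfl
    rw [mul_zero] at hg
    exact (X_pow_sub_C_ne_zero (R := K) (by omega : 0 < e) 1) (by simpa using hg)
  have hdeg : d + g.natDegree = e := by
    rw [← hnat, ← natDegree_mul hmonic.ne_zero hg0, ← hg]
    exact natDegree_X_pow_sub_C (r := (1 : K))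
  have hscale : (h.map C).scaleRoots X * (g.map C).scaleRoots X
      = (X ^ e - C X ^ e : K[X][X]) := by
    rw [← mul_scaleRoots_of_noZeroDivisors, ← Polynomial.map_mul, ← hg]
    have hnd : ((X ^ e - 1 : K[X]).map (C : K →+* K[X])).natDegree = e := by
      rw [natDegree_map]
      exact natDegree_X_pow_sub_C (r := (1 : K))
    ext1 n
    rw [coeff_scaleRoots, hnd, ← C_pow]
    simp only [Polynomial.map_sub, Polynomial.map_pow, map_X, Polynomial.map_one, coeff_sub,
      coeff_X_pow, coeff_one, coeff_C]
    rcases eq_or_ne n e with rfl | hne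
    · simp [Nat.ne_of_gt he]
    · rcases eq_or_ne n 0 with rfl | hn0
      · simp [hne]
      · simp [hne, hn0]
  have hscale_h : (h.map C).scaleRoots X =
      (X ^ d - ∑ i ∈ Finset.Icc 1 d, C (C ((a i).coeff i) * X ^ i) * X ^ (d - i) : K[X][X]) := by
    ext1 n
    rw [coeff_scaleRoots, natDegree_map, hnat, coeff_map, hh, hr]
    simp only [coeff_sub, finsetSum_coeff, coeff_C_mul, coeff_X_pow, map_sub, map_sum, sub_mul,
      Finset.sum_mul]
    congr 1
    · split_ifs with hnd
      · simp [hnd]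
      · simp
    · refine Finset.sum_congr rfl fun i hi ↦ ?_
      have := Finset.mem_Icc.1 hi
      split_ifs with hni
      · rw [hni, Nat.sub_sub_self this.2]; simp
      · simp
  have hlow : recurrencePoly d a - (h.map C).scaleRoots X ∈ lowerSpan K 1 d := by
    rw [hscale_h, recurrencePoly, sub_sub_sub_cancel_left, ← Finset.sum_sub_distrib]
    refine Submodule.sum_mem _ fun i hi ↦ ?_
    rw [← sub_mul, ← C_sub]
    refine C_mul_X_pow_mem_lowerSpan ?_ (Finset.mem_Icc.1 hi).2
    rw [degree_lt_iff_coeff_zero]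
    intro m hm
    rw [coeff_sub, coeff_C_mul, coeff_X_pow]
    split_ifs with hmi
    · simp [hmi]
    · have hmi' : i < m := by omega
      rw [coeff_eq_zero_of_degree_lt ((ha i hi).trans_lt (WithBot.coe_lt_coe.2 hmi')), mul_zero,
        sub_zero]
  refine ⟨e, he, (g.map C).scaleRoots X,
    (recurrencePoly d a - (h.map C).scaleRoots X) * (g.map C).scaleRoots X, ?_, ?_⟩
  · rw [← hdeg]
    exact mul_scaleRoots_mem_lowerSpan hlow g
  · rw [← hscale]
    ring

/-- The `K[X]`-linear functional on `K[X][X]` sending the outer `X ^ n` to `t n`. -/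
noncomputable def seqFunctional (t : ℕ → K[X]) : K[X][X] →ₗ[K[X]] K[X] :=
  (basisMonomials K[X]).constr K[X] t

lemma seqFunctional_C_mul_X_pow (t : ℕ → K[X]) (u : K[X]) (n : ℕ) :
    seqFunctional t (C u * X ^ n) = u * t n := by
  have : (X : K[X][X]) ^ n = basisMonomials K[X] n := by simp [X_pow_eq_monomial]
  rw [← smul_eq_C_mul, map_smul, seqFunctional, this, Module.Basis.constr_basis, smul_eq_mul]

lemma seqFunctional_X_pow (t : ℕ → K[X]) (n : ℕ) : seqFunctional t (X ^ n) = t n := by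
  simpa using seqFunctional_C_mul_X_pow t 1 n

lemma seqFunctional_recurrencePoly_mul {d : ℕ} {a t : ℕ → K[X]}
    (ht : ∀ n, d ≤ n → t n = ∑ i ∈ Finset.Icc 1 d, a i * t (n - i)) (G : K[X][X]) :
    seqFunctional t (recurrencePoly d a * G) = 0 := by
  induction G using Polynomial.induction_on' with
  | add p q hp hq => rw [mul_add, map_add, hp, hq, add_zero]
  | monomial n u =>
    have hX : recurrencePoly d a * X ^ n =
        (X ^ (d + n) - ∑ i ∈ Finset.Icc 1 d, C (a i) * X ^ (d + n - i) : K[X][X]) := by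
      rw [recurrencePoly, sub_mul, Finset.sum_mul, ← pow_add]
      refine congrArg _ (Finset.sum_congr rfl fun i hi ↦ ?_)
      have := Finset.mem_Icc.1 hi
      rw [mul_assoc, ← pow_add, show d - i + n = d + n - i by omega]
    rw [← C_mul_X_pow_eq_monomial, mul_left_comm, hX, ← smul_eq_C_mul, map_smul, map_sub, map_sum,
      seqFunctional_X_pow]
    simp only [seqFunctional_C_mul_X_pow]
    rw [← ht (d + n) (by omega), sub_self, smul_zero]

lemma coeff_seqFunctional_eq_zero {t : ℕ → K[X]} (ht : ∀ n, (t n).degree < n) {s D : ℕ}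
    {L : K[X][X]} (hL : L ∈ lowerSpan K s D) {n j : ℕ} (hj : n + s * D < j + s) :
    (seqFunctional t (X ^ n * L)).coeff j = 0 := by
  induction hL using Submodule.span_induction with
  | mem x hx =>
    obtain ⟨i, l, hil, rfl⟩ := hx
    rw [mul_left_comm, ← pow_add, seqFunctional_C_mul_X_pow, coeff_X_pow_mul']
    split_ifs with hlj
    · refine coeff_eq_zero_of_degree_lt ((ht _).trans_le (WithBot.coe_le_coe.2 ?_))
      have : s * (i + l + 1) ≤ s * D := Nat.mul_le_mul_left s hil
      rw [mul_add, mul_add, mul_one] at this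
      exact (by omega : n + s * i ≤ j - s * l)
    · rfl
  | zero => simp
  | add x y _ _ hx hy => rw [mul_add, map_add, coeff_add, hx, hy, add_zero]
  | smul r x _ hx =>
    have : r • x = (C r : K[X]) • x := by
      rw [Algebra.smul_def, smul_eq_C_mul, Polynomial.algebraMap_apply, algebraMap_eq]
    rw [this, mul_smul_comm, map_smul, smul_eq_mul, coeff_C_mul, hx, mul_zero]

/-- Over a finite field, the monomials of `t n` have strictly smaller content than `n`, for some
content function of sublinear growth. -/
theorem exists_content_of_recurrence [Finite K] {d : ℕ} (hd : 1 ≤ d) {a t : ℕ → K[X]}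
    (ha : ∀ i ∈ Finset.Icc 1 d, (a i).degree ≤ (i : WithBot ℕ)) (hu : (a d).coeff d ≠ 0)
    (hdeg : ∀ n, (t n).degree < n)
    (ht : ∀ n, d ≤ n → t n = ∑ i ∈ Finset.Icc 1 d, a i * t (n - i)) :
    ∃ (c : ℕ → ℝ) (α C : ℝ), 0 ≤ α ∧ α < 1 ∧ 0 < C ∧ (∀ n, 0 ≤ c n) ∧
      (∀ n j : ℕ, 1 ≤ n → j ≤ n → c j ≤ C * (n : ℝ) ^ α) ∧
      ∀ n j, (t n).coeff j ≠ 0 → c j + 1 ≤ c n := by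
  obtain ⟨p, hp⟩ := CharP.exists K
  have hprime : Fact p.Prime := ⟨CharP.char_is_prime K p⟩
  obtain ⟨e, he, G, L, hL, hG⟩ := exists_recurrencePoly_mul_eq hd ha hu
  obtain ⟨c, α, A, hα0, hα1, hA, hc0, hcle, hslack, htop⟩ :=
    exists_sublinear_content he hprime.out.two_le
  refine ⟨c, α, A, hα0, hα1, hA, hc0, hcle, fun n ↦ ?_⟩
  induction n using Nat.strong_induction_on with
  | _ n ih =>
  intro j hj
  have hjn : j < n := by
    exact WithBot.coe_lt_coe.1 ((le_degree_of_ne_zero hj).trans_lt (hdeg n))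
  rcases lt_or_ge n e with hne | hne
  · exact hslack 0 n j (hne.trans_le (Nat.le_mul_of_pos_right _ (pow_pos hprime.out.pos _)))
      (by simpa using hjn)
  obtain ⟨k, hk₁, hk₂⟩ : ∃ k, e * p ^ k ≤ n ∧ n < e * p ^ (k + 1) := by
    refine ⟨Nat.log p (n / e), ?_, ?_⟩
    · rw [mul_comm, ← Nat.le_div_iff_mul_le he]
      exact Nat.pow_log_le_self p (Nat.div_pos hne he).ne'
    · rw [mul_comm, ← Nat.div_lt_iff_lt_mul he]
      exact Nat.lt_pow_succ_log_self hprime.out.one_lt _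
  by_cases hjk : j + p ^ k ≤ n
  · exact hslack k n j hk₂ hjk
  obtain ⟨m, rfl⟩ := Nat.exists_eq_add_of_le' hk₁
  have hrel : seqFunctional t (X ^ m * (X ^ e - C X ^ e + L) ^ p ^ k) = 0 := by
    obtain ⟨q, hq⟩ := pow_ne_zero k hprime.out.ne_zero |> Nat.exists_eq_succ_of_ne_zero
    rw [← hG, hq, pow_succ', mul_assoc, mul_left_comm]
    exact seqFunctional_recurrencePoly_mul ht _
  rw [add_pow_char_pow, sub_pow_char_pow, ← pow_mul, ← pow_mul, mul_add, mul_sub, map_add, map_sub,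
    ← pow_add, seqFunctional_X_pow, ← C_pow, mul_comm (X ^ m) (C _),
    seqFunctional_C_mul_X_pow] at hrel
  have hcoeff := congrArg (fun f ↦ coeff f j) hrel
  simp only [coeff_add, coeff_sub, coeff_zero] at hcoeff
  rw [coeff_seqFunctional_eq_zero hdeg (pow_mem_lowerSpan hL k) (by rw [mul_comm]; omega),
    add_zero, sub_eq_zero, coeff_X_pow_mul'] at hcoeff
  rw [hcoeff] at hj
  split_ifs at hj with hle
  · obtain ⟨i, rfl⟩ := Nat.exists_eq_add_of_le' hle
    rw [Nat.add_sub_cancel] at hj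
    have hpos : 0 < e * p ^ k := Nat.mul_pos he (pow_pos hprime.out.pos _)
    have := ih m (by omega) i hj
    obtain ⟨w, hw⟩ := htop k
    rw [hw i (by omega), hw m hk₂]
    linarith
  · exact absurd rfl hj

end

section
variable {R : Type*} [CommRing R]

lemma coeff_map_mem (T : Module.End R R[X]) {I : Ideal R} {f : R[X]} (hf : ∀ j, f.coeff j ∈ I)
    (j : ℕ) : (T f).coeff j ∈ I := by
  rw [f.as_sum_range_C_mul_X_pow, map_sum, finsetSum_coeff]
  refine Ideal.sum_mem _ fun i _ ↦ ?_
  rw [← smul_eq_C_mul, map_smul, coeff_smul, smul_eq_mul]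
  exact I.mul_mem_right _ (hf i)

lemma coeff_pow_mem_of_content (T : Module.End R R[X]) {I P : Ideal R} {c : ℕ → ℝ}
    (hc0 : ∀ n, 0 ≤ c n) (hc : ∀ n j, (T (X ^ n)).coeff j ∉ P → c j + 1 ≤ c n) {f : R[X]} {v : ℝ}
    (hfI : ∀ j, f.coeff j ∈ I) (hf : ∀ j, f.coeff j ∉ P * I → c j < v) {k : ℕ} (hk : v ≤ k)
    (j : ℕ) : ((T ^ k) f).coeff j ∈ P * I := by
  induction k generalizing f v with
  | zero =>
    by_contra hj
    have := hf j (by simpa using hj)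
    have := hc0 j
    norm_num at hk
    linarith
  | succ k ih =>
    rw [pow_succ, Module.End.mul_apply]
    refine ih (v := v - 1) (fun j ↦ coeff_map_mem T hfI j) (fun j hj ↦ ?_) ?_
    · by_contra! hlt
      apply hj
      rw [f.as_sum_range_C_mul_X_pow, map_sum, finsetSum_coeff]
      refine Ideal.sum_mem _ fun i _ ↦ ?_
      rw [← smul_eq_C_mul, map_smul, coeff_smul, smul_eq_mul]
      by_cases hi : f.coeff i ∈ P * I
      · exact Ideal.mul_mem_right _ _ hi
      · rw [mul_comm (f.coeff i)]
        refine Ideal.mul_mem_mul ?_ (hfI i)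
        by_contra hij
        linarith [hc i j hij, hf i hi]
    · push_cast at hk
      linarith

lemma natDegree_pow_apply_le {T : Module.End R R[X]} (hT : ∀ f, f ≠ 0 → (T f).degree < f.degree)
    (k : ℕ) (f : R[X]) : ((T ^ k) f).natDegree ≤ f.natDegree := by
  induction k generalizing f with
  | zero => simp
  | succ k ih =>
    rw [pow_succ, Module.End.mul_apply]
    refine (ih _).trans ?_
    rcases eq_or_ne f 0 with rfl | hf
    · simp
    · exact natDegree_le_natDegree (hT f hf).le

/-- A sublinear power of `T` pushes the coefficients of polynomials of degree at most `n` from `I`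
into `P * I`. -/
theorem exists_pow_coeff_mem_prime_mul [Finite R] {T : Module.End R R[X]}
    (hT : ∀ f, f ≠ 0 → (T f).degree < f.degree) {d : ℕ} (hd : 1 ≤ d) {a : ℕ → R[X]}
    (ha : ∀ i ∈ Finset.Icc 1 d, (a i).degree ≤ (i : WithBot ℕ))
    (hrec : ∀ n, d ≤ n → T (X ^ n) = ∑ i ∈ Finset.Icc 1 d, a i * T (X ^ (n - i)))
    (hu : IsUnit ((a d).coeff d)) (P : Ideal R) [P.IsPrime] :
    ∃ α C : ℝ, 0 ≤ α ∧ α < 1 ∧ 0 < C ∧ ∀ (I : Ideal R) (n : ℕ) (f : R[X]) (k : ℕ), 1 ≤ n →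
      f.natDegree ≤ n → (∀ j, f.coeff j ∈ I) → C * (n : ℝ) ^ α ≤ k →
      ∀ j, ((T ^ k) f).coeff j ∈ P * I := by
  have hmax : P.IsMaximal := Ideal.IsPrime.isMaximal' ‹_›
  let _ : Field (R ⧸ P) := Ideal.Quotient.field P
  let π := Ideal.Quotient.mk P
  have hnontriv : Nontrivial R := π.domain_nontrivial
  have hfin : Finite (R ⧸ P) := Finite.of_surjective π Ideal.Quotient.mk_surjective
  obtain ⟨c, α, C, hα0, hα1, hC, hc0, hcle, hc⟩ :=
    exists_content_of_recurrence (K := R ⧸ P) hd (a := fun i ↦ (a i).map π)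
      (t := fun n ↦ (T (X ^ n)).map π) (fun i hi ↦ degree_map_le.trans (ha i hi))
      (by rw [coeff_map]; exact (hu.map π).ne_zero)
      (fun n ↦ degree_map_le.trans_lt
        ((hT _ (monic_X_pow n).ne_zero).trans_le (degree_X_pow_le n)))
      (fun n hn ↦ by simp only [hrec n hn, Polynomial.map_sum, Polynomial.map_mul])
  refine ⟨α, C + 1, hα0, hα1, by positivity, fun I n f k hn hfn hfI hk ↦ ?_⟩
  refine coeff_pow_mem_of_content T hc0 (fun n j hj ↦ hc n j ?_) hfI (fun j hj ↦ ?_) hk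
  · rwa [coeff_map, Ne, Ideal.Quotient.eq_zero_iff_mem]
  · have hjn : j ≤ n := by
      refine (le_natDegree_of_ne_zero fun h0 ↦ hj ?_).trans hfn
      rw [h0]
      exact Ideal.zero_mem _
    have hpos : 0 < (n : ℝ) ^ α := Real.rpow_pos_of_pos (by exact_mod_cast hn) _
    linarith [hcle n j hn hjn]

/-- A sublinear power of `T` pushes the coefficients of polynomials of degree at most `n` into a
given product of prime ideals. -/
theorem exists_pow_coeff_mem_prod [Finite R] {T : Module.End R R[X]}
    (hT : ∀ f, f ≠ 0 → (T f).degree < f.degree) {d : ℕ} (hd : 1 ≤ d) {a : ℕ → R[X]}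
    (ha : ∀ i ∈ Finset.Icc 1 d, (a i).degree ≤ (i : WithBot ℕ))
    (hrec : ∀ n, d ≤ n → T (X ^ n) = ∑ i ∈ Finset.Icc 1 d, a i * T (X ^ (n - i)))
    (hu : IsUnit ((a d).coeff d)) (Z : Multiset (PrimeSpectrum R)) :
    ∃ α C : ℝ, 0 ≤ α ∧ α < 1 ∧ 0 < C ∧ ∀ (n : ℕ) (f : R[X]) (k : ℕ), 1 ≤ n →
      f.natDegree ≤ n → C * (n : ℝ) ^ α ≤ k →
      ∀ j, ((T ^ k) f).coeff j ∈ (Z.map PrimeSpectrum.asIdeal).prod := by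
  induction Z using Multiset.induction_on with
  | empty => exact ⟨0, 1, le_rfl, one_pos, one_pos, fun _ _ _ _ _ _ _ ↦ by simp⟩
  | cons P Z ih =>
    obtain ⟨α₁, C₁, hα₁, hα₁', hC₁, h₁⟩ := ih
    obtain ⟨α₂, C₂, hα₂, hα₂', hC₂, h₂⟩ :=
      exists_pow_coeff_mem_prime_mul hT hd ha hrec hu P.asIdeal
    refine ⟨max α₁ α₂, C₁ + 1 + C₂, le_max_of_le_left hα₁, max_lt hα₁' hα₂', by positivity,
      fun n f k hn hf hk ↦ ?_⟩
    have hn' : (1 : ℝ) ≤ n := by exact_mod_cast hn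
    have hle₁ : C₁ * (n : ℝ) ^ α₁ ≤ C₁ * (n : ℝ) ^ max α₁ α₂ :=
      mul_le_mul_of_nonneg_left (Real.rpow_le_rpow_of_exponent_le hn' (le_max_left _ _)) hC₁.le
    have hle₂ : C₂ * (n : ℝ) ^ α₂ ≤ C₂ * (n : ℝ) ^ max α₁ α₂ :=
      mul_le_mul_of_nonneg_left (Real.rpow_le_rpow_of_exponent_le hn' (le_max_right _ _)) hC₂.le
    have hone : 1 ≤ (n : ℝ) ^ max α₁ α₂ := Real.one_le_rpow hn' (le_max_of_le_left hα₁)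
    have hpos : 0 < C₂ * (n : ℝ) ^ max α₁ α₂ := by positivity
    have hceil := Nat.ceil_lt_add_one (a := C₁ * (n : ℝ) ^ α₁) (by positivity)
    obtain ⟨l, rfl⟩ : ∃ l, k = l + ⌈C₁ * (n : ℝ) ^ α₁⌉₊ := by
      refine Nat.exists_eq_add_of_le' ?_
      have : (⌈C₁ * (n : ℝ) ^ α₁⌉₊ : ℝ) ≤ k := by linarith
      exact_mod_cast this
    rw [Multiset.map_cons, Multiset.prod_cons, pow_add]
    push_cast at hk
    exact h₂ _ n _ l hn ((natDegree_pow_apply_le hT _ _).trans hf)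
      (h₁ n f _ hn hf (Nat.le_ceil _)) (by linarith)

end

/-- **Nilpotence Growth Theorem.** -/
theorem stmt0 {R : Type} [CommRing R] [Fintype R]
    (T : Module.End R (Polynomial R))
    (h1 : ∀ f : Polynomial R, f ≠ 0 → (T f).degree < f.degree)
    (d : ℕ) (hd : 1 ≤ d) (a : ℕ → Polynomial R)
    (h2deg : ∀ i ∈ Finset.Icc 1 d, (a i).degree ≤ (i : WithBot ℕ))
    (h2rec : ∀ n, d ≤ n →
      T ((X : Polynomial R) ^ n) = ∑ i ∈ Finset.Icc 1 d, a i * T (X ^ (n - i)))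
    (h3 : IsUnit ((a d).coeff d)) :
    ∃ α : ℝ, α < 1 ∧ ∃ C : ℝ, 0 < C ∧ ∀ n : ℕ, 1 ≤ n →
      (nilpIndex T (X ^ n) : ℝ) ≤ C * (n : ℝ) ^ α := by
  obtain ⟨Z, hZ⟩ := PrimeSpectrum.exists_primeSpectrum_prod_le R (⊥ : Ideal R)
  obtain ⟨α, C, -, hα, hC, h⟩ := exists_pow_coeff_mem_prod h1 hd h2deg h2rec h3 Z
  refine ⟨α, hα, C, hC, fun n hn ↦ ?_⟩
  have hbound : nilpIndex T (X ^ n) ≤ ⌊C * (n : ℝ) ^ α⌋₊ := by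
    refine csSup_le' fun k hk ↦ Nat.le_floor ?_
    by_contra! hlt
    exact hk (Polynomial.ext fun j ↦ by
      simpa using hZ (h n (X ^ n) k hn (natDegree_X_pow_le n) hlt.le j))
  exact (Nat.cast_le.2 hbound).trans (Nat.floor_le (by positivity))
end

section
/- Let p be a prime, R a commutative ring of characteristic p, and T : R[y] → R[y] an R-linear operator with deg T(f) < deg f for every nonzero f ∈ R[y]. Suppose there exist integers d ≥ D ≥ 1, an element a ∈ R, and polynomials c_1, …, c_d ∈ R[y] with deg c_i ≤ i − D for 1 ≤ i ≤ d−1 and c_d = a·y^d + r for some r ∈ R[y] with deg r ≤ d − D, such that T(y^n) = −( c_1·T(y^{n−1}) + c_2·T(y^{n−2}) + ⋯ + c_d·T(y^{n−d}) ) for all n ≥ d (i.e., the companion polynomial of the recursion is X^d + a·y^d + terms of total degree ≤ d − D). Let b be a power of p with b ≥ d and b − D ≥ 2, and suppose that either b − d ≤ 1 or D ≤ b/2. Then there is a constant C > 0 such that N_T(y^n) ≤ C·n^{log(b−D)/log b} for all n ≥ 1. -/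
open Polynomial

/-- The base-`b` digits of `q`, evaluated at `w`. -/
def digitWeight (b w q : ℕ) : ℕ :=
  Nat.ofDigits w (Nat.digits b q)

section digitWeight

variable {b w : ℕ}

lemma digitWeight_zero : digitWeight b w 0 = 0 := by
  simp [digitWeight]

lemma digitWeight_eq (hb : 1 < b) (q : ℕ) :
    digitWeight b w q = q % b + w * digitWeight b w (q / b) := by
  rcases Nat.eq_zero_or_pos q with rfl | hq
  · simp [digitWeight]
  · simp [digitWeight, Nat.digits_def' hb hq, Nat.ofDigits_cons]

lemma digitWeight_of_lt (hb : 1 < b) {q : ℕ} (hq : q < b) : digitWeight b w q = q := by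
  rw [digitWeight_eq hb, Nat.div_eq_of_lt hq, Nat.mod_eq_of_lt hq, digitWeight_zero]
  simp

lemma digitWeight_mul_add (hb : 1 < b) (q : ℕ) {u : ℕ} (hu : u < b) :
    digitWeight b w (b * q + u) = w * digitWeight b w q + u := by
  rw [digitWeight_eq hb, Nat.mul_add_mod, Nat.mod_eq_of_lt hu, Nat.mul_add_div (by omega),
    Nat.div_eq_of_lt hu, add_zero, add_comm]

lemma digitWeight_pow (hb : 1 < b) (k : ℕ) : digitWeight b w (b ^ k) = w ^ k := by
  induction k with
  | zero => simpa using digitWeight_of_lt (w := w) hb hb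
  | succ k ih =>
    have h := digitWeight_mul_add (w := w) hb (b ^ k) (u := 0) (by omega)
    rw [add_zero, add_zero, ih] at h
    rw [pow_succ', h, pow_succ']

lemma digitWeight_succ_le (hb : 1 < b) (hw : w ≤ b) (z : ℕ) :
    digitWeight b w (z + 1) ≤ digitWeight b w z + 1 := by
  induction z using Nat.strong_induction_on with
  | _ z ih =>
    rw [digitWeight_eq hb (z + 1), digitWeight_eq hb z]
    have hlt := Nat.mod_lt z (show 0 < b by omega)
    have hz := Nat.div_add_mod z b
    by_cases hc : z % b + 1 < b
    · have h1 : (z + 1) % b = z % b + 1 := by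
        rw [← Nat.mod_add_mod, Nat.mod_eq_of_lt hc]
      have h2 : (z + 1) / b = z / b := by
        conv_lhs => rw [← hz, add_assoc, Nat.mul_add_div (by omega), Nat.div_eq_of_lt hc]
        simp
      rw [h1, h2]; omega
    · have he : z + 1 = b * (z / b + 1) := by rw [mul_add]; omega
      have h1 : (z + 1) % b = 0 := by rw [he]; simp
      have h2 : (z + 1) / b = z / b + 1 := by
        rw [he, Nat.mul_div_cancel_left _ (by omega)]
      have := ih (z / b) (Nat.div_lt_self (by
        rcases Nat.eq_zero_or_pos z with rfl | h
        · simp at hc; omega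
        · exact h) hb)
      rw [h1, h2]
      nlinarith

lemma digitWeight_add_le (hb : 1 < b) (hw : w ≤ b) (x y : ℕ) :
    digitWeight b w (x + y) ≤ digitWeight b w x + digitWeight b w y := by
  induction x using Nat.strong_induction_on generalizing y with
  | _ x ih =>
    rcases Nat.eq_zero_or_pos x with rfl | hx
    · simp
    have ihq := ih (x / b) (Nat.div_lt_self hx hb) (y / b)
    rw [digitWeight_eq hb (x + y), digitWeight_eq hb x, digitWeight_eq hb y,
      Nat.add_mod, Nat.add_div (by omega)]
    have hxl := Nat.mod_lt x (show 0 < b by omega)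
    have hyl := Nat.mod_lt y (show 0 < b by omega)
    split_ifs with hc
    · have h3 : (x % b + y % b) % b = x % b + y % b - b := by
        rw [Nat.mod_eq_sub_mod hc, Nat.mod_eq_of_lt (by omega)]
      have h4 := digitWeight_succ_le hb hw (x / b + y / b)
      have h5 : w * digitWeight b w (x / b + y / b + 1) ≤
          w * (digitWeight b w (x / b) + digitWeight b w (y / b) + 1) :=
        Nat.mul_le_mul_left _ (by omega)
      rw [h3]
      simp only [mul_add, mul_one] at h5
      omega
    · rw [Nat.mod_eq_of_lt (by omega), add_zero]
      have h5 := Nat.mul_le_mul_left w ihq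
      rw [mul_add] at h5
      omega

lemma digitWeight_sub_pow (hb : 1 < b) {k q : ℕ} (h1 : b ^ k ≤ q) (h2 : q < b ^ (k + 1)) :
    digitWeight b w (q - b ^ k) + w ^ k = digitWeight b w q := by
  induction k generalizing q with
  | zero =>
    simp only [pow_zero, zero_add, pow_one] at *
    rw [digitWeight_of_lt hb h2, digitWeight_of_lt hb (by omega)]
    omega
  | succ k ih =>
    have hq1 : b ^ k ≤ q / b := by
      rw [Nat.le_div_iff_mul_le (by omega), ← pow_succ]; exact h1
    have hq2 : q / b < b ^ (k + 1) := by
      rw [Nat.div_lt_iff_lt_mul (by omega), ← pow_succ]; exact h2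
    have hmod := Nat.mod_lt q (show 0 < b by omega)
    have hdecomp : q - b ^ (k + 1) = b * (q / b - b ^ k) + q % b := by
      have := Nat.div_add_mod q b
      rw [Nat.mul_sub, ← pow_succ']
      have : b ^ (k + 1) ≤ b * (q / b) := by
        rw [pow_succ']; exact Nat.mul_le_mul_left _ hq1
      omega
    rw [hdecomp, digitWeight_mul_add hb _ hmod, digitWeight_eq hb q, ← ih hq1 hq2, pow_succ']
    ring

lemma digitWeight_add_base_le (hb : 1 < b) (hw : 2 ≤ w) {k q : ℕ} (hq : q < b ^ k) :
    digitWeight b w q + b ≤ b * w ^ k := by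
  induction k generalizing q with
  | zero =>
    obtain rfl : q = 0 := by simpa using hq
    simp [digitWeight_zero]
  | succ k ih =>
    have hq2 : q / b < b ^ k := by
      rw [Nat.div_lt_iff_lt_mul (by omega), ← pow_succ]; exact hq
    have h := Nat.mul_le_mul_left w (ih hq2)
    have hmod := Nat.mod_lt q (show 0 < b by omega)
    rw [digitWeight_eq hb q, pow_succ]
    nlinarith

end digitWeight

/-- The content of `n = d * q + s`, `s < d`: the quotient `q` contributes `d - D` times its base-`b`
digits evaluated at `b - D`, and the remainder `s` contributes itself. -/
def recContent (b d D n : ℕ) : ℕ :=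
  (d - D) * digitWeight b (b - D) (n / d) + n % d

section recContent

variable {b d D : ℕ}

lemma recContent_of_lt {n : ℕ} (hn : n < d) : recContent b d D n = n := by
  simp [recContent, Nat.div_eq_of_lt hn, Nat.mod_eq_of_lt hn, digitWeight_zero]

lemma recContent_add_le (hb : 1 < b) (hd : 0 < d) (x y : ℕ) :
    recContent b d D (x + y) ≤ recContent b d D x + recContent b d D y := by
  have hsub := digitWeight_add_le hb (Nat.sub_le b D)
  unfold recContent
  rw [Nat.add_mod, Nat.add_div hd]
  have hxl := Nat.mod_lt x hd
  have hyl := Nat.mod_lt y hd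
  have h4 := hsub (x / d) (y / d)
  split_ifs with hc
  · have h3 : (x % d + y % d) % d = x % d + y % d - d := by
      rw [Nat.mod_eq_sub_mod hc, Nat.mod_eq_of_lt (by omega)]
    have h5 := hsub (x / d + y / d) 1
    rw [digitWeight_of_lt hb hb] at h5
    have h6 := Nat.mul_le_mul_left (d - D) (h5.trans (Nat.add_le_add_right h4 1))
    simp only [mul_add, mul_one] at h6
    rw [h3]
    omega
  · have h6 := Nat.mul_le_mul_left (d - D) h4
    rw [mul_add] at h6
    rw [Nat.mod_eq_of_lt (by omega), add_zero]
    omega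

lemma recContent_base_mul_le (hb : 1 < b) (hd : 0 < d) (hDd : D ≤ d) (hdb : d ≤ b) (x : ℕ) :
    recContent b d D (b * x) ≤ (b - D) * recContent b d D x := by
  set q := x / d with hq
  set s := x % d with hs
  have hx : d * q + s = x := Nat.div_add_mod x d
  have hsd : s < d := Nat.mod_lt x hd
  set u := b * s / d with hu
  set v := b * s % d with hv
  have huv : d * u + v = b * s := Nat.div_add_mod _ d
  have hvd : v < d := Nat.mod_lt _ hd
  have hub : u < b := by
    rw [hu, Nat.div_lt_iff_lt_mul hd]
    exact Nat.mul_lt_mul_of_pos_left hsd (by omega)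
  have hsu : s ≤ u := by
    rw [hu, Nat.le_div_iff_mul_le hd, mul_comm]
    exact Nat.mul_le_mul_right _ hdb
  have hbx : b * x = d * (b * q + u) + v := by
    rw [← hx]; linarith [huv, mul_left_comm b d q]
  have h1 : b * x / d = b * q + u := by
    rw [hbx, Nat.mul_add_div hd, Nat.div_eq_of_lt hvd, add_zero]
  have h2 : b * x % d = v := by
    rw [hbx, Nat.mul_add_mod, Nat.mod_eq_of_lt hvd]
  unfold recContent
  rw [h1, h2, digitWeight_mul_add hb _ hub, ← hq, ← hs]
  obtain ⟨e, rfl⟩ := Nat.exists_eq_add_of_le hDd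
  obtain ⟨f, rfl⟩ := Nat.exists_eq_add_of_le (hDd.trans hdb)
  simp only [Nat.add_sub_cancel_left]
  nlinarith [Nat.mul_le_mul_left D hsu]

lemma recContent_base_pow_le (hb : 1 < b) (hD : 0 < D) (hDd : D ≤ d) (hdb : d ≤ b) (k : ℕ) :
    recContent b d D (b ^ k) ≤ (b - D) ^ k := by
  induction k with
  | zero =>
    rcases Nat.lt_or_ge 1 d with hd | hd
    · simp [recContent_of_lt hd]
    · obtain rfl : d = 1 := by omega
      obtain rfl : D = 1 := by omega
      simp [recContent]
  | succ k ih =>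
    rw [pow_succ', pow_succ']
    exact (recContent_base_mul_le hb (by omega) hDd hdb _).trans (Nat.mul_le_mul_left _ ih)

lemma recContent_mul_base_pow_le (hb : 1 < b) (hD : 0 < D) (hDd : D ≤ d) (hdb : d ≤ b) (j k : ℕ) :
    recContent b d D (j * b ^ k) ≤ j * (b - D) ^ k := by
  induction j with
  | zero => simp [recContent, digitWeight_zero]
  | succ j ih =>
    rw [add_mul, add_mul, one_mul, one_mul]
    exact (recContent_add_le hb (by omega) _ _).trans
      (Nat.add_le_add ih (recContent_base_pow_le hb hD hDd hdb k))

lemma recContent_sub_mul_pow (hb : 1 < b) (hd : 0 < d) {k n : ℕ}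
    (h1 : b ^ k ≤ n / d) (h2 : n / d < b ^ (k + 1)) :
    recContent b d D (n - d * b ^ k) + (d - D) * (b - D) ^ k = recContent b d D n := by
  unfold recContent
  have hle : d * b ^ k ≤ n := by
    rw [mul_comm]; exact (Nat.le_div_iff_mul_le hd).1 h1
  rw [Nat.sub_mul_div, Nat.sub_mul_mod hle, ← digitWeight_sub_pow hb h1 h2]
  ring

lemma recContent_mul_pow (hb : 1 < b) (hd : 0 < d) (k : ℕ) :
    recContent b d D (d * b ^ k) = (d - D) * (b - D) ^ k := by
  unfold recContent
  rw [Nat.mul_div_cancel_left _ hd, digitWeight_pow hb]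
  simp

lemma recContent_sub_le (hb : 1 < b) (hD : 0 < D) (hDd : D ≤ d) (hdb : d ≤ b) {i k n : ℕ}
    (h1 : b ^ k ≤ n / d) (h2 : n / d < b ^ (k + 1)) (hDi : D ≤ i) (hid : i ≤ d) :
    recContent b d D (n - i * b ^ k) + (i - D) * (b - D) ^ k ≤ recContent b d D n := by
  have hd : 0 < d := by omega
  have hle : d * b ^ k ≤ n := by
    rw [mul_comm]; exact (Nat.le_div_iff_mul_le hd).1 h1
  obtain ⟨t, rfl⟩ := Nat.exists_eq_add_of_le hid
  have hsplit : n - i * b ^ k = (n - (i + t) * b ^ k) + t * b ^ k := by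
    have := add_mul i t (b ^ k)
    omega
  have hadd := recContent_add_le (D := D) hb hd (n - (i + t) * b ^ k) (t * b ^ k)
  rw [← hsplit] at hadd
  have ht := recContent_mul_base_pow_le hb hD hDd hdb t k
  have hn := recContent_sub_mul_pow (D := D) hb hd h1 h2
  have hcoef : (i + t - D) * (b - D) ^ k = (i - D) * (b - D) ^ k + t * (b - D) ^ k := by
    rw [← add_mul]; congr 1; omega
  omega

lemma recContent_le (hb : 1 < b) (hw : 2 ≤ b - D) {k n : ℕ} (hd : 0 < d) (hn : n < b ^ (k + 1)) :
    recContent b d D n ≤ (d * b * (b - D) + d) * (b - D) ^ k := by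
  have h := digitWeight_add_base_le hb hw (lt_of_le_of_lt (Nat.div_le_self n d) hn)
  have hmod := Nat.mod_lt n hd
  have h3 : (d - D) * digitWeight b (b - D) (n / d) ≤ d * (b * (b - D) ^ (k + 1)) :=
    Nat.mul_le_mul (Nat.sub_le _ _) (by omega)
  have h4 : d * 1 ≤ d * (b - D) ^ k := Nat.mul_le_mul_left _ (Nat.one_le_pow _ _ (by omega))
  unfold recContent
  calc _ ≤ d * (b * (b - D) ^ (k + 1)) + d * (b - D) ^ k := by omega
    _ = _ := by ring

lemma recContent_le_rpow (hw : 2 ≤ b - D) (hd : 0 < d) {n : ℕ} (hn : 1 ≤ n) :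
    (recContent b d D n : ℝ) ≤
      (d * b * (b - D) + d : ℕ) * (n : ℝ) ^ (Real.log ((b - D : ℕ) : ℝ) / Real.log (b : ℝ)) := by
  have hb : 1 < b := by omega
  have hb' : (1 : ℝ) < b := by exact_mod_cast hb
  have hw' : (1 : ℝ) < (b - D : ℕ) := by exact_mod_cast hw
  set k := Nat.log b n
  have hk : b ^ k ≤ n := Nat.pow_log_le_self b (by omega)
  set α := Real.log ((b - D : ℕ) : ℝ) / Real.log (b : ℝ) with hα
  have hα0 : 0 ≤ α := div_nonneg (Real.log_nonneg hw'.le) (Real.log_nonneg hb'.le)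
  have hbα : (b : ℝ) ^ α = (b - D : ℕ) := by
    rw [hα, Real.log_div_log]
    exact Real.rpow_logb (by linarith) (by linarith) (by linarith)
  have hpow : (((b - D) ^ k : ℕ) : ℝ) ≤ (n : ℝ) ^ α := by
    rw [Nat.cast_pow, ← hbα, ← Real.rpow_natCast, ← Real.rpow_mul (by linarith), mul_comm α,
      Real.rpow_mul (by linarith), Real.rpow_natCast]
    exact Real.rpow_le_rpow (by positivity) (by exact_mod_cast hk) hα0
  calc (recContent b d D n : ℝ) ≤ ((d * b * (b - D) + d) * (b - D) ^ k : ℕ) := by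
        exact_mod_cast recContent_le hb hw hd (Nat.lt_pow_succ_log_self hb n)
    _ = (d * b * (b - D) + d : ℕ) * (((b - D) ^ k : ℕ) : ℝ) := Nat.cast_mul _ _
    _ ≤ _ := by gcongr

end recContent

section recursion

/-- In characteristic `p`, a linear recursion persists after raising its companion polynomial to a
power of `p`. -/
lemma recursion_pow_char_pow {S : Type*} [CommRing S] (p : ℕ) (hp : p.Prime) [CharP S p]
    (t : ℕ → S) (d : ℕ) (c : ℕ → S)
    (hrec : ∀ n, d ≤ n → t n = -∑ i ∈ Finset.Icc 1 d, c i * t (n - i))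
    (e n : ℕ) (hn : d * p ^ e ≤ n) :
    t n = -∑ i ∈ Finset.Icc 1 d, c i ^ p ^ e * t (n - i * p ^ e) := by
  have : Fact p.Prime := ⟨hp⟩
  obtain ⟨L, hL⟩ : ∃ L : S[X] →ₗ[S] S, ∀ (g : S) (n : ℕ), L (C g * X ^ n) = g * t n :=
    ⟨Polynomial.lsum fun n => LinearMap.toSpanSingleton S S (t n), fun g n => by
      simp [C_mul_X_pow_eq_monomial, Polynomial.lsum_apply, Polynomial.sum_monomial_index]⟩
  have hL1 : ∀ n : ℕ, L (X ^ n) = t n := fun n => by simpa using hL 1 n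
  obtain ⟨P, hPdef⟩ : ∃ P : S[X], P = X ^ d + ∑ i ∈ Finset.Icc 1 d, C (c i) * X ^ (d - i) :=
    ⟨_, rfl⟩
  have hX : ∀ m, L (X ^ m * P) = 0 := by
    intro m
    have hexp : X ^ m * P = X ^ (m + d) + ∑ i ∈ Finset.Icc 1 d, C (c i) * X ^ (m + d - i) := by
      rw [hPdef, mul_add, ← pow_add, Finset.mul_sum]
      refine congrArg _ (Finset.sum_congr rfl fun i hi => ?_)
      rw [Nat.add_sub_assoc (Finset.mem_Icc.1 hi).2, pow_add, mul_left_comm]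
    rw [hexp, map_add, map_sum, hL1, hrec _ (Nat.le_add_left d m)]
    simp only [hL, neg_add_cancel]
  have hP : ∀ Q : S[X], L (Q * P) = 0 := by
    intro Q
    induction Q using Polynomial.induction_on' with
    | add f g hf hg => rw [add_mul, map_add, hf, hg, add_zero]
    | monomial m g =>
      rw [← C_mul_X_pow_eq_monomial, mul_assoc, ← smul_eq_C_mul, map_smul, hX, smul_zero]
  have hPpow : X ^ (n - d * p ^ e) * P ^ p ^ e = X ^ n +
      ∑ i ∈ Finset.Icc 1 d, C (c i ^ p ^ e) * X ^ (n - i * p ^ e) := by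
    rw [hPdef, add_pow_char_pow, sum_pow_char_pow, mul_add, ← pow_mul, ← pow_add,
      Nat.sub_add_cancel hn, Finset.mul_sum]
    refine congrArg _ (Finset.sum_congr rfl fun i hi => ?_)
    have hle : i * p ^ e ≤ d * p ^ e := Nat.mul_le_mul_right _ (Finset.mem_Icc.1 hi).2
    have hexp : n - i * p ^ e = (n - d * p ^ e) + (d - i) * p ^ e := by
      rw [Nat.sub_mul]; omega
    rw [mul_pow, ← pow_mul, hexp, pow_add, C_pow, mul_left_comm]
  obtain ⟨q, hq⟩ := Nat.exists_eq_succ_of_ne_zero (pow_ne_zero e hp.ne_zero)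
  have hzero : L (X ^ (n - d * p ^ e) * P ^ p ^ e) = 0 := by
    rw [show P ^ p ^ e = P ^ q * P by rw [hq, pow_succ], ← mul_assoc]
    exact hP _
  rw [hPpow, map_add, map_sum, hL1] at hzero
  simp only [hL] at hzero
  exact eq_neg_of_add_eq_zero_left hzero

variable {R : Type} [CommRing R]

lemma exists_coeff_ne_zero_of_coeff_pow_char_pow_ne_zero (p : ℕ) (hp : p.Prime) [CharP R p]
    (f : R[X]) (e m : ℕ) (h : (f ^ p ^ e).coeff m ≠ 0) :
    ∃ j, f.coeff j ≠ 0 ∧ m = j * p ^ e := by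
  have : Fact p.Prime := ⟨hp⟩
  rw [f.as_sum_support_C_mul_X_pow, sum_pow_char_pow, finsetSum_coeff] at h
  obtain ⟨j, hj, hne⟩ := Finset.exists_ne_zero_of_sum_ne_zero h
  refine ⟨j, mem_support_iff.1 hj, ?_⟩
  rw [mul_pow, ← C_pow, ← pow_mul, coeff_C_mul_X_pow] at hne
  by_contra hm
  exact hne (if_neg hm)

lemma exists_coeff_ne_zero_of_coeff_mul_ne_zero {f g : R[X]} {m : ℕ} (h : (f * g).coeff m ≠ 0) :
    ∃ i j, f.coeff i ≠ 0 ∧ g.coeff j ≠ 0 ∧ i + j = m := by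
  rw [coeff_mul] at h
  obtain ⟨⟨i, j⟩, hij, hne⟩ := Finset.exists_ne_zero_of_sum_ne_zero h
  exact ⟨i, j, left_ne_zero_of_mul hne, right_ne_zero_of_mul hne,
    Finset.HasAntidiagonal.mem_antidiagonal.1 hij⟩

/-- If `T` strictly lowers a weight `φ` on monomials, then `T ^ M` kills all polynomials whose
monomials have weight less than `M`. -/
lemma pow_apply_eq_zero_of_lowers (T : Module.End R R[X]) (φ : ℕ → ℕ)
    (hT : ∀ n m, (T (X ^ n)).coeff m ≠ 0 → φ m < φ n) (M : ℕ) (f : R[X])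
    (hf : ∀ m, f.coeff m ≠ 0 → φ m < M) : (T ^ M) f = 0 := by
  induction M generalizing f with
  | zero =>
    ext m
    by_contra h
    exact Nat.not_lt_zero _ (hf m (by simpa using h))
  | succ M ih =>
    rw [pow_succ, Module.End.mul_apply]
    refine ih _ fun m hm => ?_
    rw [f.as_sum_support_C_mul_X_pow, map_sum, finsetSum_coeff] at hm
    obtain ⟨j, hj, hne⟩ := Finset.exists_ne_zero_of_sum_ne_zero hm
    rw [← smul_eq_C_mul, map_smul, coeff_smul, smul_eq_mul] at hne
    have h1 := hT j m (right_ne_zero_of_mul hne)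
    have h2 := hf j (mem_support_iff.1 hj)
    omega

lemma nilpIndex_le_of_lowers (T : Module.End R R[X]) (φ : ℕ → ℕ)
    (hT : ∀ n m, (T (X ^ n)).coeff m ≠ 0 → φ m < φ n) (n : ℕ) :
    nilpIndex T (X ^ n) ≤ φ n := by
  refine csSup_le' fun k hk => ?_
  by_contra! hlt
  refine hk (pow_apply_eq_zero_of_lowers T φ hT k _ fun m hm => ?_)
  rw [coeff_X_pow] at hm
  obtain rfl : m = n := by
    by_contra hne
    exact hm (if_neg hne)
  exact hlt

lemma recContent_lowers (p : ℕ) (hp : p.Prime) [CharP R p] (T : Module.End R R[X])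
    (hdeglow : ∀ f : R[X], f ≠ 0 → (T f).degree < f.degree)
    {b d D : ℕ} (hD : 0 < D) (hDd : D ≤ d) (hb : 1 < b) (hbp : ∃ k : ℕ, b = p ^ k) (hdb : d ≤ b)
    (c : ℕ → R[X])
    (hc : ∀ i, 1 ≤ i → i ≤ d → ∀ j, (c i).coeff j ≠ 0 → j + D ≤ i ∨ (i = d ∧ j = d))
    (hrec : ∀ n, d ≤ n → T ((X : R[X]) ^ n) = -∑ i ∈ Finset.Icc 1 d, c i * T (X ^ (n - i)))
    (n m : ℕ) (hm : (T (X ^ n)).coeff m ≠ 0) :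
    recContent b d D m < recContent b d D n := by
  have hd : 0 < d := by omega
  induction n using Nat.strong_induction_on generalizing m with
  | _ n ih =>
  rcases Nat.lt_or_ge n d with hnd | hnd
  · have : Nontrivial R := CharP.nontrivial_of_char_ne_one hp.ne_one (R := R)
    have hlt : m < n := by
      have h := hdeglow (X ^ n) (monic_X_pow n).ne_zero
      rw [degree_X_pow] at h
      exact_mod_cast (le_degree_of_ne_zero hm).trans_lt h
    rw [recContent_of_lt hnd, recContent_of_lt (by omega)]
    exact hlt
  · have hq : 1 ≤ n / d := (Nat.le_div_iff_mul_le hd).2 (by omega)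
    set k := Nat.log b (n / d)
    have h1 : b ^ k ≤ n / d := Nat.pow_log_le_self b (by omega)
    have h2 : n / d < b ^ (k + 1) := Nat.lt_pow_succ_log_self hb _
    have hle : d * b ^ k ≤ n := by
      rw [mul_comm]; exact (Nat.le_div_iff_mul_le hd).1 h1
    have hBpos : 0 < b ^ k := by positivity
    obtain ⟨e, he⟩ : ∃ e, b ^ k = p ^ e := by
      obtain ⟨l, rfl⟩ := hbp
      exact ⟨l * k, (pow_mul p l k).symm⟩
    rw [recursion_pow_char_pow p hp (fun n => T (X ^ n)) d c hrec e n (he ▸ hle), coeff_neg, neg_ne_zero,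
      finsetSum_coeff] at hm
    obtain ⟨i, hi, hne⟩ := Finset.exists_ne_zero_of_sum_ne_zero hm
    rw [Finset.mem_Icc] at hi
    obtain ⟨s, m', hs, hm', rfl⟩ := exists_coeff_ne_zero_of_coeff_mul_ne_zero hne
    obtain ⟨j, hj, rfl⟩ := exists_coeff_ne_zero_of_coeff_pow_char_pow_ne_zero p hp _ _ _ hs
    rw [← he] at hm' ⊢
    have hiB : 0 < i * b ^ k := Nat.mul_pos hi.1 hBpos
    have hm'lt := ih (n - i * b ^ k) (by omega) m' hm'
    have hadd := recContent_add_le (D := D) hb hd (j * b ^ k) m'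
    rcases hc i hi.1 hi.2 j hj with hji | ⟨rfl, rfl⟩
    · have h3 := recContent_sub_le hb hD hDd hdb h1 h2 (i := i) (by omega) hi.2
      have h4 := recContent_mul_base_pow_le hb hD hDd hdb j k
      have h5 : j * (b - D) ^ k ≤ (i - D) * (b - D) ^ k := Nat.mul_le_mul_right _ (by omega)
      omega
    · have h3 := recContent_sub_mul_pow (D := D) hb hd h1 h2
      rw [recContent_mul_pow hb hd] at hadd
      omega

end recursion

/-- **Empty-middle Nilpotence Growth Theorem.** -/
theorem stmt2 (p : ℕ) (hp : p.Prime) {R : Type} [CommRing R] [CharP R p]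
    (T : Module.End R (Polynomial R))
    (hdeglow : ∀ f : Polynomial R, f ≠ 0 → (T f).degree < f.degree)
    (d D : ℕ) (hD1 : 1 ≤ D) (hDd : D ≤ d)
    (a : R) (c : ℕ → Polynomial R) (r : Polynomial R)
    -- `deg c_i ≤ i - D` for `1 ≤ i ≤ d-1` (as integers, so `c i = 0` if `i < D`):
    (hci : ∀ i, 1 ≤ i → i ≤ d - 1 → ∀ k : ℕ, (c i).coeff k ≠ 0 → (k : ℤ) ≤ (i : ℤ) - D)
    (hcd : c d = C a * X ^ d + r)
    (hr : r.degree ≤ ((d - D : ℕ) : WithBot ℕ))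
    (hrec : ∀ n, d ≤ n →
      T ((X : Polynomial R) ^ n) = -∑ i ∈ Finset.Icc 1 d, c i * T (X ^ (n - i)))
    (b : ℕ) (hb : ∃ k : ℕ, b = p ^ k) (hbd : d ≤ b) (hbD : 2 ≤ b - D)
    (hcase : b - d ≤ 1 ∨ 2 * D ≤ b) :
    ∃ Cst : ℝ, 0 < Cst ∧ ∀ n : ℕ, 1 ≤ n →
      (nilpIndex T (X ^ n) : ℝ) ≤
        Cst * (n : ℝ) ^ (Real.log ((b - D : ℕ) : ℝ) / Real.log (b : ℝ)) := by
  have hd : 0 < d := by omega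
  refine ⟨(d * b * (b - D) + d : ℕ), by exact_mod_cast (by omega), fun n hn => ?_⟩
  refine le_trans ?_ (recContent_le_rpow hbD hd hn)
  refine Nat.cast_le.2 (nilpIndex_le_of_lowers T (recContent b d D) ?_ n)
  refine recContent_lowers p hp T hdeglow hD1 hDd (by omega) hb hbd c (fun i hi hid j hj => ?_) hrec
  rcases Nat.lt_or_ge i d with hlt | hge
  · have := hci i hi (by omega) j hj
    omega
  · obtain rfl : i = d := by omega
    by_cases hji : j = i
    · exact Or.inr ⟨rfl, hji⟩
    · rw [hcd, coeff_add, coeff_C_mul_X_pow, if_neg hji, zero_add] at hj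
      have hle : j ≤ i - D := by exact_mod_cast (le_degree_of_ne_zero hj).trans hr
      omega
end

section
/- Let p be a prime, M a commutative ring of characteristic p, M' an M-module, and s : ℕ → M' a sequence satisfying an order-d linear recurrence with coefficients a_1, …, a_d ∈ M: s_n = a_1·s_{n−1} + a_2·s_{n−2} + ⋯ + a_d·s_{n−d} for all n ≥ d. Then for every k ≥ 0, the sequence s also satisfies the order-(d·p^k) recurrence s_n = a_1^{p^k}·s_{n−p^k} + a_2^{p^k}·s_{n−2·p^k} + ⋯ + a_d^{p^k}·s_{n−d·p^k} for all n ≥ d·p^k. -/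
open Polynomial in
/-- If two polynomials in an endomorphism agree on a vector, so do their powers. -/
theorem Polynomial.aeval_pow_apply_eq_of_aeval_apply_eq {R N : Type*} [CommSemiring R]
    [AddCommMonoid N] [Module R N] (T : Module.End R N) {P Q : R[X]} {v : N}
    (h : aeval T P v = aeval T Q v) (q : ℕ) : aeval T (P ^ q) v = aeval T (Q ^ q) v := by
  induction q with
  | zero => simp
  | succ q ih =>
    rw [pow_succ, map_mul, Module.End.mul_apply, h, ← Module.End.mul_apply, ← map_mul, mul_comm,
      map_mul, Module.End.mul_apply, ih, ← Module.End.mul_apply, ← map_mul, ← pow_succ']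

/-- The iterated shift operator on sequences. -/
theorem LinearMap.funLeft_succ_pow_apply (R : Type*) {N : Type*} [Semiring R] [AddCommMonoid N]
    [Module R N] (s : ℕ → N) (j m : ℕ) :
    ((LinearMap.funLeft R N Nat.succ : Module.End R (ℕ → N)) ^ j) s m = s (m + j) := by
  induction j generalizing m with
  | zero => simp
  | succ j ih =>
    rw [pow_succ', Module.End.mul_apply, LinearMap.funLeft_apply, ih]
    congr 1
    omega

open Polynomial in
/-- In characteristic `p`, a linear recurrence of order `d` yields, for every `k`,
a linear recurrence of order `d·p^k` with Frobenius-twisted coefficients. -/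
theorem stmt5 (p : ℕ) (hp : p.Prime) {M : Type} [CommRing M] [CharP M p]
    {M' : Type} [AddCommMonoid M'] [Module M M']
    (d : ℕ) (a : ℕ → M) (s : ℕ → M')
    (hrec : ∀ n, d ≤ n → s n = ∑ i ∈ Finset.Icc 1 d, a i • s (n - i)) :
    ∀ k : ℕ, ∀ n, d * p ^ k ≤ n →
      s n = ∑ i ∈ Finset.Icc 1 d, (a i) ^ (p ^ k) • s (n - i * p ^ k) := by
  intro k n hn
  have : Fact p.Prime := ⟨hp⟩
  let T : Module.End M (ℕ → M') := LinearMap.funLeft M M' Nat.succ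
  have aeval_sum (b : ℕ → M) (e : ℕ → ℕ) (m : ℕ) :
      aeval T (∑ i ∈ Finset.Icc 1 d, C (b i) * X ^ e i) s m =
        ∑ i ∈ Finset.Icc 1 d, b i • s (m + e i) := by
    simp [T, LinearMap.sum_apply, Finset.sum_apply, Module.End.mul_apply,
      LinearMap.funLeft_succ_pow_apply]
  have hT : aeval T (X ^ d : M[X]) s =
      aeval T (∑ i ∈ Finset.Icc 1 d, C (a i) * X ^ (d - i)) s := by
    ext m
    rw [aeval_sum, aeval_X_pow, LinearMap.funLeft_succ_pow_apply, hrec _ (Nat.le_add_left d m)]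
    refine Finset.sum_congr rfl fun i hi => ?_
    rw [Nat.add_sub_assoc (Finset.mem_Icc.mp hi).2]
  have hq := congrFun (aeval_pow_apply_eq_of_aeval_apply_eq T hT (p ^ k)) (n - d * p ^ k)
  simp only [sum_pow_char_pow, mul_pow, ← C_pow, ← pow_mul] at hq
  rw [aeval_sum, aeval_X_pow, LinearMap.funLeft_succ_pow_apply, Nat.sub_add_cancel hn] at hq
  rw [hq]
  refine Finset.sum_congr rfl fun i hi => ?_
  have hi' : i * p ^ k ≤ d * p ^ k := Nat.mul_le_mul_right _ (Finset.mem_Icc.mp hi).2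
  rw [Nat.sub_mul]
  congr 2
  omega
end

section
/- Let F be a finite field, let h ∈ F[X] be a monic polynomial with h(0) ≠ 0, let L be a splitting field of h over F, and let q be the cardinality of L. If m ≥ 0 is an integer such that for every root α of h in L the multiplicity of α as a root of h is at most q^m, then h divides X^{q^m·(q−1)} − 1 in F[X]. -/
open Polynomial

/-- Over a finite field `L` of cardinality `q`, raising to the power `q ^ m` is additive on
polynomials, so `X ^ (q ^ m * n) - 1 = (X ^ n - 1) ^ q ^ m`. -/
theorem X_pow_card_pow_mul_sub_one {L : Type*} [Field L] [Fintype L] (m n : ℕ) :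
    (X ^ (Fintype.card L ^ m * n) - 1 : L[X]) = (X ^ n - 1) ^ Fintype.card L ^ m := by
  obtain ⟨p, hp⟩ := CharP.exists L
  obtain ⟨k, hprime, hk⟩ := FiniteField.card L p
  have : Fact p.Prime := ⟨hprime⟩
  rw [hk, ← pow_mul p, sub_pow_char_pow, one_pow, ← pow_mul, mul_comm]

/-- If `h` is monic over a finite field `F` with `h(0) ≠ 0`, `L` is a splitting field of `h`
of cardinality `q`, and every root of `h` in `L` has multiplicity at most `q^m`,
then `h` divides `X^{q^m·(q−1)} − 1`. -/
theorem stmt6 {F L : Type} [Field F] [Fintype F] [Field L] [Fintype L] [Algebra F L]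
    (h : Polynomial F) (hmonic : h.Monic) (h0 : h.eval 0 ≠ 0)
    [Polynomial.IsSplittingField F L h]
    (m : ℕ)
    (hmult : ∀ α : L, aeval α h = 0 →
      (h.map (algebraMap F L)).rootMultiplicity α ≤ (Fintype.card L) ^ m) :
    h ∣ X ^ ((Fintype.card L) ^ m * (Fintype.card L - 1)) - 1 := by
  classical
  have hmap : h.map (algebraMap F L) ≠ 0 := (hmonic.map _).ne_zero
  have hexp : Fintype.card L ^ m * (Fintype.card L - 1) ≠ 0 :=
    mul_ne_zero (pow_ne_zero _ Fintype.card_ne_zero)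
      (Nat.sub_pos_of_lt Fintype.one_lt_card).ne'
  have hne : (X ^ (Fintype.card L ^ m * (Fintype.card L - 1)) - 1 : L[X]) ≠ 0 :=
    (monic_X_pow_sub_C 1 hexp).ne_zero
  rw [← map_dvd_map' (algebraMap F L)]
  simp only [Polynomial.map_sub, Polynomial.map_pow, map_X, Polynomial.map_one]
  refine (IsSplittingField.splits L h).dvd_of_roots_le_roots hmap
    (Multiset.le_iff_count.mpr fun α => ?_)
  rw [count_roots, count_roots]
  by_cases hα : aeval α h = 0
  · refine (hmult α hα).trans ((le_rootMultiplicity_iff hne).mpr ?_)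
    have hα0 : α ≠ 0 := by
      rintro rfl
      apply h0
      rwa [← coeff_zero_eq_aeval_zero', map_eq_zero, coeff_zero_eq_eval_zero] at hα
    rw [X_pow_card_pow_mul_sub_one]
    refine pow_dvd_pow_of_dvd (dvd_iff_isRoot.mpr ?_) _
    simp [FiniteField.pow_card_sub_one_eq_one α hα0]
  · rw [rootMultiplicity_eq_zero]
    · exact Nat.zero_le _
    · rwa [IsRoot, eval_map_algebraMap]
end

section
/- Let p be a prime, R a commutative ring of characteristic p, and let d ≥ D ≥ 1 be integers. Let T : R[y] → R[y] be an R-linear operator with deg T(f) < deg f for every nonzero f, such that there exist a ∈ R and c_1, …, c_d ∈ R[y] with deg c_i ≤ i − D for 1 ≤ i ≤ d−1 and c_d = a·y^d + r, deg r ≤ d − D, satisfying T(y^n) = −( c_1·T(y^{n−1}) + ⋯ + c_d·T(y^{n−d}) ) for all n ≥ d. Let b be a power of p with b ≥ d. Suppose c : ℕ → ℚ_{≥0} and a positive integer M satisfy: (discreteness) M·c(n) ∈ ℕ for all n; (base property) 0 = c(0) < c(1) < ⋯ < c(d−1) and c(d−D) < c(d); (step property) for every k ≥ 0, every pair (i,j)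 with either (i,j) = (d,d) or 0 ≤ j and j + D ≤ i ≤ d, and all integers n, m with d·b^k ≤ n < d·b^{k+1} and j·b^k ≤ m, one has c(n) − c(n − i·b^k) ≥ c(m) − c(m − j·b^k). Then N_T(y^n) ≤ M·c(n) for all n. -/
open Polynomial

/-- In characteristic `p`, a sequence satisfying a linear recursion also satisfies the recursion
whose characteristic polynomial is a `p ^ e`-th power of the original one. -/
theorem linear_recursion_pow_char {A : Type*} [CommRing A] (p : ℕ) [Fact p.Prime] [CharP A p]
    (d : ℕ) (c s : ℕ → A)
    (hs : ∀ n, d ≤ n → s n = -∑ i ∈ Finset.Icc 1 d, c i * s (n - i)) (e n : ℕ)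
    (hn : d * p ^ e ≤ n) :
    s n = -∑ i ∈ Finset.Icc 1 d, c i ^ p ^ e * s (n - i * p ^ e) := by
  let S : Module.End A (ℕ → A) := LinearMap.funLeft A A Nat.succ
  have hS : ∀ (k : ℕ) (t : ℕ → A) (m : ℕ), (S ^ k) t m = t (m + k) := by
    intro k
    induction k with
    | zero => intro t m; rfl
    | succ k ih =>
      intro t m
      rw [pow_succ, Module.End.mul_apply, ih]
      rfl
  let P : A[X] := X ^ d + ∑ i ∈ Finset.Icc 1 d, C (c i) * X ^ (d - i)
  have hP : aeval S P s = 0 := by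
    funext m
    simp only [P, map_add, map_sum, map_mul, map_pow, aeval_X, aeval_C, LinearMap.add_apply,
      LinearMap.sum_apply, Module.End.mul_apply, Pi.add_apply, Finset.sum_apply, hS,
      Module.algebraMap_end_apply, Pi.smul_apply, smul_eq_mul, Pi.zero_apply]
    rw [hs (m + d) (by omega), neg_add_eq_zero]
    refine Finset.sum_congr rfl fun i hi => ?_
    rw [Nat.add_sub_assoc (Finset.mem_Icc.1 hi).2]
  have hPq : aeval S (P ^ p ^ e) s = 0 := by
    obtain ⟨q, hq⟩ := Nat.exists_eq_succ_of_ne_zero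
      (pow_ne_zero e (Fact.out : p.Prime).ne_zero)
    rw [hq, Nat.succ_eq_add_one, pow_succ, map_mul, Module.End.mul_apply, hP, map_zero]
  have hexp : P ^ p ^ e = X ^ (d * p ^ e) +
      ∑ i ∈ Finset.Icc 1 d, C (c i ^ p ^ e) * X ^ ((d - i) * p ^ e) := by
    simp only [P]
    rw [add_pow_char_pow, sum_pow_char_pow]
    simp only [mul_pow, ← pow_mul, C_pow]
  rw [hexp] at hPq
  have h := congrFun hPq (n - d * p ^ e)
  simp only [map_add, map_sum, map_mul, aeval_X_pow, aeval_C, LinearMap.add_apply,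
    LinearMap.sum_apply, Module.End.mul_apply, Pi.add_apply, Finset.sum_apply, hS,
    Module.algebraMap_end_apply, Pi.smul_apply, smul_eq_mul, Pi.zero_apply] at h
  rw [Nat.sub_add_cancel hn] at h
  rw [eq_neg_of_add_eq_zero_left h]
  congr 1
  refine Finset.sum_congr rfl fun i hi => ?_
  have hid := (Finset.mem_Icc.1 hi).2
  have hle : i * p ^ e ≤ d * p ^ e := Nat.mul_le_mul_right _ hid
  congr 2
  rw [Nat.sub_mul]
  omega

/-- The exponents occurring in `f ^ p ^ e` are `p ^ e` times exponents occurring in `f`. -/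
theorem exists_coeff_ne_zero_of_coeff_pow_char {R : Type*} [CommRing R] (p : ℕ) [Fact p.Prime]
    [CharP R p] (f : R[X]) (e m : ℕ) (h : (f ^ p ^ e).coeff m ≠ 0) :
    ∃ j, f.coeff j ≠ 0 ∧ m = j * p ^ e := by
  have hpos : 0 < p ^ e := pow_pos (Fact.out : p.Prime).pos e
  rw [← Polynomial.map_iterateFrobenius_expand p f e, coeff_map, coeff_expand hpos] at h
  split_ifs at h with hdvd
  · exact ⟨m / p ^ e, fun h0 => h (by rw [h0, map_zero]), (Nat.div_mul_cancel hdvd).symm⟩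
  · exact absurd (map_zero _) h

/-- Every exponent occurring in `T f` occurs in `T (X ^ n)` for some exponent `n` of `f`. -/
theorem exists_coeff_ne_zero_of_coeff_map {R : Type*} [CommRing R] (T : Module.End R R[X])
    (f : R[X]) (m : ℕ) (h : (T f).coeff m ≠ 0) :
    ∃ n, f.coeff n ≠ 0 ∧ (T (X ^ n)).coeff m ≠ 0 := by
  have hf : T f = ∑ n ∈ f.support, f.coeff n • T (X ^ n) := by
    conv_lhs => rw [f.as_sum_support_C_mul_X_pow]
    simp only [map_sum, C_mul', map_smul]
  rw [hf, finsetSum_coeff] at h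
  obtain ⟨n, hn, hne⟩ := Finset.exists_ne_zero_of_sum_ne_zero h
  rw [coeff_smul, smul_eq_mul] at hne
  exact ⟨n, mem_support_iff.1 hn, right_ne_zero_of_mul hne⟩

/-- If `T` strictly decreases the weight `c` of exponents and `M * c` is integral, then
`M * c n` bounds the nilpotence index of `X ^ n`. -/
theorem nilpIndex_X_pow_le {R : Type} [CommRing R] (T : Module.End R R[X]) (c : ℕ → ℚ)
    (hpos : ∀ n, 0 ≤ c n) (M : ℕ) (hM : 0 < M) (hdisc : ∀ n : ℕ, ∃ m : ℕ, (M : ℚ) * c n = m)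
    (hlow : ∀ n m, (T (X ^ n)).coeff m ≠ 0 → c m < c n) (n : ℕ) :
    (nilpIndex T (X ^ n) : ℚ) ≤ (M : ℚ) * c n := by
  have hM' : (0 : ℚ) < M := by exact_mod_cast hM
  have key : ∀ k m : ℕ, ((T ^ k) (X ^ n)).coeff m ≠ 0 → (M : ℚ) * c m + k ≤ M * c n := by
    intro k
    induction k with
    | zero =>
      intro m h
      rw [pow_zero, Module.End.one_apply, coeff_X_pow] at h
      have hmn : m = n := by
        by_contra hne
        exact h (if_neg hne)
      simp [hmn]
    | succ k ih =>
      intro m h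
      rw [pow_succ', Module.End.mul_apply] at h
      obtain ⟨l, hl, hlm⟩ := exists_coeff_ne_zero_of_coeff_map T _ m h
      have h₁ := ih l hl
      have h₂ : (M : ℚ) * c m < M * c l := mul_lt_mul_of_pos_left (hlow l m hlm) hM'
      obtain ⟨u, hu⟩ := hdisc m
      obtain ⟨v, hv⟩ := hdisc l
      rw [hu, hv] at h₂
      have h₃ : u + 1 ≤ v := by exact_mod_cast h₂
      have h₄ : (u : ℚ) + 1 ≤ v := by exact_mod_cast h₃
      push_cast
      linarith
  obtain ⟨v, hv⟩ := hdisc n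
  have hbound : ∀ k ∈ {k : ℕ | (T ^ k) (X ^ n) ≠ 0}, k ≤ v := by
    intro k hk
    obtain ⟨m, hm⟩ : ∃ m, ((T ^ k) (X ^ n)).coeff m ≠ 0 := by
      by_contra! h0
      exact hk (Polynomial.ext (by simpa using h0))
    have h₁ := key k m hm
    have h₂ : 0 ≤ (M : ℚ) * c m := mul_nonneg hM'.le (hpos m)
    have h₃ : (k : ℚ) ≤ v := by linarith
    exact_mod_cast h₃
  rw [hv]
  exact_mod_cast csSup_le' (hbound : v ∈ upperBounds _)

/-- A nilgrowth witness bounds the nilpotence index of a nilpotent recursion operator. -/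
theorem stmt7 (p : ℕ) (hp : p.Prime) {R : Type} [CommRing R] [CharP R p]
    (d D : ℕ) (hD1 : 1 ≤ D) (hDd : D ≤ d)
    (T : Module.End R (Polynomial R))
    (hdeglow : ∀ f : Polynomial R, f ≠ 0 → (T f).degree < f.degree)
    (a : R) (cp : ℕ → Polynomial R) (r : Polynomial R)
    (hci : ∀ i, 1 ≤ i → i ≤ d - 1 → ∀ k : ℕ, (cp i).coeff k ≠ 0 → (k : ℤ) ≤ (i : ℤ) - D)
    (hcd : cp d = C a * X ^ d + r)
    (hr : r.degree ≤ ((d - D : ℕ) : WithBot ℕ))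
    (hrec : ∀ n, d ≤ n →
      T ((X : Polynomial R) ^ n) = -∑ i ∈ Finset.Icc 1 d, cp i * T (X ^ (n - i)))
    (b : ℕ) (hb : ∃ k : ℕ, b = p ^ k) (hbd : d ≤ b)
    (c : ℕ → ℚ) (hpos : ∀ n, 0 ≤ c n) (M : ℕ) (hM : 0 < M)
    -- discreteness:
    (hdisc : ∀ n : ℕ, ∃ m : ℕ, (M : ℚ) * c n = m)
    -- base property:
    (hbase0 : c 0 = 0)
    (hbase1 : ∀ i : ℕ, i + 1 ≤ d - 1 → c i < c (i + 1))
    (hbase2 : c (d - D) < c d)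
    -- step property:
    (hstep : ∀ k : ℕ, ∀ i j : ℕ, ((i = d ∧ j = d) ∨ (j + D ≤ i ∧ i ≤ d)) →
      ∀ n m : ℕ, d * b ^ k ≤ n → n < d * b ^ (k + 1) → j * b ^ k ≤ m →
        c m - c (m - j * b ^ k) ≤ c n - c (n - i * b ^ k)) :
    ∀ n : ℕ, (nilpIndex T (X ^ n) : ℚ) ≤ (M : ℚ) * c n := by
  have : Fact p.Prime := ⟨hp⟩
  obtain ⟨l, rfl⟩ := hb
  refine nilpIndex_X_pow_le T c hpos M hM hdisc ?_
  have hdeg : ∀ n m, (T (X ^ n)).coeff m ≠ 0 → m < n := by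
    intro n m h
    have hX : (X ^ n : R[X]) ≠ 0 := fun h0 => h (by rw [h0, map_zero, coeff_zero])
    have h₁ := (le_degree_of_ne_zero h).trans_lt
      ((hdeglow _ hX).trans_le (degree_X_pow_le n))
    exact_mod_cast h₁
  have hadm : ∀ i ∈ Finset.Icc 1 d, ∀ j, (cp i).coeff j ≠ 0 →
      (i = d ∧ j = d) ∨ (j + D ≤ i ∧ i ≤ d) := by
    intro i hi j hj
    obtain ⟨h1, h2⟩ := Finset.mem_Icc.1 hi
    rcases h2.lt_or_eq with hlt | rfl
    · have := hci i h1 (by omega) j hj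
      omega
    · by_cases hjd : j = i
      · exact Or.inl ⟨rfl, hjd⟩
      · rw [hcd, coeff_add, coeff_C_mul_X_pow, if_neg hjd, zero_add] at hj
        have : j ≤ i - D := by exact_mod_cast (le_degree_of_ne_zero hj).trans hr
        omega
  have hmono : ∀ n, n ≤ d - 1 → ∀ m, m < n → c m < c n := by
    intro n hn m hmn
    induction n with
    | zero => omega
    | succ n ih =>
      rcases (Nat.lt_succ_iff.1 hmn).lt_or_eq with h | rfl
      · exact (ih (by omega) h).trans (hbase1 n hn)
      · exact hbase1 m hn
  by_cases hb1 : p ^ l = 1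
  · have hd : d = 1 := by omega
    subst hd
    have hT : ∀ n, T (X ^ n) = 0 := by
      intro n
      induction n with
      | zero =>
        ext m
        by_contra h
        exact absurd (hdeg 0 m h) (Nat.not_lt_zero m)
      | succ n ih =>
        rw [hrec (n + 1) (by omega)]
        simp [ih]
    intro n m h
    simp [hT] at h
  have hb2 : 1 < p ^ l := by
    have := pow_pos hp.pos l
    omega
  intro n
  induction n using Nat.strong_induction_on with
  | _ n ih =>
  intro m hm
  by_cases hnd : n < d
  · exact hmono n (by omega) m (hdeg n m hm)
  have hd0 : 0 < d := by omega
  obtain ⟨k, hk₁, hk₂⟩ : ∃ k, d * (p ^ l) ^ k ≤ n ∧ n < d * (p ^ l) ^ (k + 1) := by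
    refine ⟨Nat.log (p ^ l) (n / d), ?_, ?_⟩
    · have h := Nat.pow_log_le_self (p ^ l)
        (Nat.div_pos (not_lt.1 hnd) hd0).ne'
      rw [mul_comm]
      exact (Nat.le_div_iff_mul_le hd0).1 h
    · have h := Nat.lt_pow_succ_log_self hb2 (n / d)
      rw [mul_comm]
      exact (Nat.div_lt_iff_lt_mul hd0).1 h
  have hq : (p ^ l) ^ k = p ^ (l * k) := (pow_mul p l k).symm
  have hqpos : 0 < p ^ (l * k) := pow_pos hp.pos _
  rw [linear_recursion_pow_char p d cp (fun n => T (X ^ n)) hrec (l * k) n (hq ▸ hk₁),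
    coeff_neg, neg_ne_zero, finsetSum_coeff] at hm
  obtain ⟨i, hi, hne⟩ := Finset.exists_ne_zero_of_sum_ne_zero hm
  rw [coeff_mul] at hne
  obtain ⟨⟨u, v⟩, huv, hne'⟩ := Finset.exists_ne_zero_of_sum_ne_zero hne
  obtain ⟨j, hj, hu⟩ :=
    exists_coeff_ne_zero_of_coeff_pow_char p (cp i) _ u (left_ne_zero_of_mul hne')
  have hv : c v < c (n - i * p ^ (l * k)) := by
    refine ih _ ?_ v (right_ne_zero_of_mul hne')
    have h1 : 0 < i * p ^ (l * k) := Nat.mul_pos (Finset.mem_Icc.1 hi).1 hqpos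
    have h2 : 0 < n := by omega
    omega
  have huv' : u + v = m := Finset.HasAntidiagonal.mem_antidiagonal.1 huv
  have hs := hstep k i j (hadm i hi j hj) n m hk₁ hk₂ (by rw [hq]; omega)
  rw [hq, show m - j * p ^ (l * k) = v by omega] at hs
  linarith
end

section
/- Let b, d, D be integers with 1 ≤ D ≤ d ≤ b and β := b − D ≥ 2, and set c(i) := c_{b,β}(i/d) for integers i ≥ 0. Suppose that d = b, or d = b − 1, or D ≤ b/2. Then: (1) c(d − D) ≤ c(d); and (2) 0 = c(0) < c(1) < c(2) < ⋯ < c(d−1). -/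
/-- The `i`-th base-`b` digit (for `i : ℤ`) of a real number `x ≥ 0`:
`⌊x·b^{−i}⌋ mod b`. -/
noncomputable def bDigit (b : ℕ) (x : ℝ) (i : ℤ) : ℤ :=
  ⌊x * (b : ℝ) ^ (-i)⌋ % b

/-- The `(b,β)`-content of a real number `x ≥ 0`: read the base-`b` digits of `x`
in base `β`. -/
noncomputable def content (b β : ℕ) (x : ℝ) : ℝ :=
  ∑' i : ℤ, (bDigit b x i : ℝ) * (β : ℝ) ^ i

lemma bDigit_mul_base {b : ℕ} (hb : 0 < b) (x : ℝ) (i : ℤ) :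
    bDigit b (b * x) i = bDigit b x (i - 1) := by
  have hb' : (b : ℝ) ≠ 0 := by positivity
  have h : (b : ℝ) * x * (b : ℝ) ^ (-i) = x * (b : ℝ) ^ (-(i - 1)) := by
    rw [show -(i - 1) = -i + 1 by ring, zpow_add_one₀ hb']
    ring
  rw [bDigit, bDigit, h]

lemma content_mul_base {b β : ℕ} (hb : 0 < b) (hβ : 0 < β) (x : ℝ) :
    content b β (b * x) = β * content b β x := by
  have hβ' : (β : ℝ) ≠ 0 := by positivity
  unfold content
  rw [← tsum_mul_left,
    ← (Equiv.subRight (1 : ℤ)).tsum_eq fun i => (β : ℝ) * ((bDigit b x i : ℝ) * (β : ℝ) ^ i)]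
  refine tsum_congr fun i => ?_
  rw [bDigit_mul_base hb, Equiv.subRight_apply, zpow_sub_one₀ hβ']
  field_simp

lemma bDigit_eq_zero_of_pos {b : ℕ} (hb : 0 < b) {x : ℝ} (hx0 : 0 ≤ x) (hxb : x < b) {i : ℤ}
    (hi : 0 < i) : bDigit b x i = 0 := by
  have hb' : (0 : ℝ) < b := by exact_mod_cast hb
  have hb1 : (1 : ℝ) ≤ b := by exact_mod_cast hb
  have hfloor : ⌊x * (b : ℝ) ^ (-i)⌋ = 0 := by
    rw [Int.floor_eq_zero_iff]
    refine ⟨by positivity, ?_⟩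
    calc x * (b : ℝ) ^ (-i) < b * (b : ℝ) ^ (-i) := by gcongr
      _ ≤ b * (b : ℝ) ^ (-1 : ℤ) := by
          exact mul_le_mul_of_nonneg_left (zpow_le_zpow_right₀ hb1 (by omega)) hb'.le
      _ = 1 := by rw [zpow_neg_one, mul_inv_cancel₀ hb'.ne']
  rw [bDigit, hfloor, Int.zero_emod]

lemma summable_bDigit_mul_zpow {b β : ℕ} (hb : 0 < b) (hβ : 2 ≤ β) {x : ℝ} (hx0 : 0 ≤ x)
    (hxb : x < b) : Summable fun i : ℤ => (bDigit b x i : ℝ) * (β : ℝ) ^ i := by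
  have hβ' : (2 : ℝ) ≤ β := by exact_mod_cast hβ
  have hbz : (0 : ℤ) < b := by exact_mod_cast hb
  rw [summable_int_iff_summable_nat_and_neg]
  constructor
  · refine summable_of_ne_finset_zero (s := {0}) fun n hn => ?_
    have hn' : (0 : ℤ) < n := by
      have : n ≠ 0 := by simpa using hn
      omega
    rw [bDigit_eq_zero_of_pos hb hx0 hxb hn', Int.cast_zero, zero_mul]
  · have hgeom : Summable fun n : ℕ => (b : ℝ) * ((β : ℝ)⁻¹) ^ n :=
      (summable_geometric_of_lt_one (by positivity)
        (inv_lt_one_of_one_lt₀ (by linarith))).mul_left _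
    refine Summable.of_nonneg_of_le (fun n => ?_) (fun n => ?_) hgeom
    · have h : (0 : ℝ) ≤ bDigit b x (-n) := by
        exact_mod_cast Int.emod_nonneg _ hbz.ne'
      positivity
    · have h : (bDigit b x (-n) : ℝ) ≤ b := by
        exact_mod_cast (Int.emod_lt_of_pos _ hbz).le
      rw [zpow_neg, zpow_natCast, inv_pow]
      gcongr

lemma bDigit_natCast_add_of_neg (b a : ℕ) (y : ℝ) {i : ℤ} (hi : i < 0) :
    bDigit b (a + y) i = bDigit b y i := by
  obtain ⟨k, rfl⟩ : ∃ k : ℕ, i = -(k + 1 : ℕ) := ⟨(-i - 1).toNat, by omega⟩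
  have h : ((a : ℝ) + y) * (b : ℝ) ^ (- -((k + 1 : ℕ) : ℤ))
      = y * (b : ℝ) ^ (- -((k + 1 : ℕ) : ℤ)) + ((b * (a * b ^ k) : ℤ) : ℝ) := by
    rw [neg_neg, zpow_natCast]
    push_cast
    ring
  rw [bDigit, bDigit, h, Int.floor_add_intCast, Int.add_mul_emod_self_left]

lemma content_natCast_add {b β a : ℕ} (hab : a < b) (hβ : 2 ≤ β) {y : ℝ} (hy0 : 0 ≤ y)
    (hy1 : y < 1) : content b β (a + y) = a + content b β y := by
  have hb : 0 < b := by omega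
  have hab' : (a : ℝ) + 1 ≤ b := by exact_mod_cast hab
  have ha0 : (0 : ℝ) ≤ a := by positivity
  have hyb : y < b := by linarith
  have hsum : HasSum (fun i : ℤ => if i = 0 then (a : ℝ) else 0) a := hasSum_ite_eq 0 _
  have hy := (summable_bDigit_mul_zpow hb hβ hy0 hyb).hasSum
  rw [content, content, ← (hsum.add hy).tsum_eq]
  refine tsum_congr fun i => ?_
  rcases lt_trichotomy i 0 with hi | rfl | hi
  · rw [bDigit_natCast_add_of_neg b a y hi, if_neg hi.ne, zero_add]
  · have hfloor : ⌊y⌋ = 0 := Int.floor_eq_zero_iff.2 ⟨hy0, hy1⟩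
    have hmod : (a : ℤ) % b = a := Int.emod_eq_of_lt (by positivity) (by exact_mod_cast hab)
    simp [bDigit, hfloor, hmod]
  · rw [bDigit_eq_zero_of_pos hb (by positivity) (by linarith) hi,
      bDigit_eq_zero_of_pos hb hy0 hyb hi, if_neg hi.ne']
    simp

lemma content_zero (b β : ℕ) : content b β 0 = 0 := by
  simp [content, bDigit]

lemma content_one {b β : ℕ} (hb : 1 < b) (hβ : 2 ≤ β) : content b β 1 = 1 := by
  simpa [content_zero] using content_natCast_add (a := 1) hb hβ le_rfl zero_lt_one

/-- Long division: the leading base-`b` digit of `i / d` is `b * i / d`, with remainder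
`b * i % d`. -/
lemma mul_content_div {b β d i : ℕ} (hβ : 2 ≤ β) (hi : i < d) (hb : 0 < b) :
    (β : ℝ) * content b β (i / d)
      = (b * i / d : ℕ) + content b β ((b * i % d : ℕ) / d) := by
  have hd : 0 < d := by omega
  have hd' : (0 : ℝ) < d := by exact_mod_cast hd
  have hlt : b * i / d < b := by
    rw [Nat.div_lt_iff_lt_mul hd]
    exact Nat.mul_lt_mul_of_pos_left hi hb
  have hdm : (d : ℝ) * (b * i / d : ℕ) + (b * i % d : ℕ) = b * i := by
    exact_mod_cast Nat.div_add_mod (b * i) d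
  rw [← content_natCast_add hlt hβ (by positivity), ← content_mul_base hb (by omega)]
  · congr 1
    field_simp
    linarith
  · rw [div_lt_one hd']
    exact_mod_cast Nat.mod_lt _ hd

section LongDivision

/-- The `n`-digit truncation of the content of `i / d`, computed by long division. -/
noncomputable def truncContent (b d : ℕ) (β : ℝ) : ℕ → ℕ → ℝ
  | 0, _ => 0
  | n + 1, i => ((b * i / d : ℕ) + truncContent b d β n (b * i % d)) / β

lemma truncContent_tendsto {b d : ℕ} {β : ℝ} (hβ : 2 ≤ β) {c : ℕ → ℝ}
    (hc : ∀ i < d, β * c i = (b * i / d : ℕ) + c (b * i % d)) {i : ℕ} (hi : i < d) :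
    Filter.Tendsto (fun n => truncContent b d β n i) Filter.atTop (nhds (c i)) := by
  have hd : 0 < d := by omega
  have hβ0 : 0 < β := by linarith
  set K := ∑ j ∈ Finset.range d, |c j| with hK
  have key : ∀ n, ∀ j < d, |truncContent b d β n j - c j| ≤ K * β⁻¹ ^ n := by
    intro n
    induction n with
    | zero =>
      intro j hj
      simpa [truncContent] using
        Finset.single_le_sum (f := fun j => |c j|) (fun _ _ => abs_nonneg _)
          (Finset.mem_range.2 hj)
    | succ n ih =>
      intro j hj
      have h := ih _ (Nat.mod_lt (b * j) hd)
      have heq : truncContent b d β (n + 1) j - c j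
          = (truncContent b d β n (b * j % d) - c (b * j % d)) * β⁻¹ := by
        rw [truncContent, ← div_eq_mul_inv]
        field_simp
        linarith [hc j hj]
      rw [heq, abs_mul, abs_of_pos (inv_pos.2 hβ0), pow_succ, ← mul_assoc]
      gcongr
  rw [tendsto_iff_norm_sub_tendsto_zero]
  refine squeeze_zero (fun _ => norm_nonneg _) (fun n => key n i hi) ?_
  simpa using (tendsto_pow_atTop_nhds_zero_of_lt_one (inv_pos.2 hβ0).le
    (inv_lt_one_of_one_lt₀ (by linarith))).const_mul K

lemma mul_div_add_one_le {b d i j : ℕ} (hd : 0 < d) (hdb : d ≤ b) (hij : i < j) :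
    b * i / d + 1 ≤ b * j / d := by
  rw [← Nat.add_div_right _ hd]
  exact Nat.div_le_div_right (by nlinarith)

lemma mul_div_add_two_le {b d i j : ℕ} (hdb : d ≤ b) (hij : i < j)
    (h : b * j % d < b * i % d) : b * i / d + 2 ≤ b * j / d := by
  have h1 := Nat.div_add_mod (b * i) d
  have h2 := Nat.div_add_mod (b * j) d
  by_contra! hlt
  have h3 : d * (b * j / d) ≤ d * (b * i / d + 1) := Nat.mul_le_mul_left _ (by omega)
  have h4 : b * i + b ≤ b * j := by nlinarith
  rw [mul_add] at h3
  omega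

lemma mul_div_add_two_le_base {b d i : ℕ} (hdb : d < b) (hi : i < d) :
    b * i / d + 2 ≤ b := by
  have hd : 0 < d := by omega
  have h : b * i / d < b - 1 := by
    rw [Nat.div_lt_iff_lt_mul hd]
    obtain ⟨e, rfl⟩ : ∃ e, b = e + 1 := ⟨b - 1, by omega⟩
    simp only [Nat.add_sub_cancel]
    nlinarith
  omega

lemma mul_div_add_three_le_base {b d i : ℕ} (hdb : d < b) (hi : i + 2 ≤ d) :
    b * i / d + 3 ≤ b := by
  have hd : 0 < d := by omega
  have h : b * i / d < b - 2 := by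
    rw [Nat.div_lt_iff_lt_mul hd]
    obtain ⟨e, rfl⟩ : ∃ e, b = e + 2 := ⟨b - 2, by omega⟩
    simp only [Nat.add_sub_cancel]
    nlinarith
  omega

lemma truncContent_mem_and_mono {b d : ℕ} {β : ℝ} (hβ : 2 ≤ β) (hbβ : (b : ℝ) ≤ 2 * β)
    (hdb : d < b) (n : ℕ) :
    (∀ i < d, 0 ≤ truncContent b d β n i ∧ truncContent b d β n i ≤ 2) ∧
    ∀ i j, i ≤ j → j < d → truncContent b d β n i ≤ truncContent b d β n j := by
  have hβ0 : 0 < β := by linarith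
  induction n with
  | zero => simp [truncContent]
  | succ n ih =>
    obtain ⟨hbd, hmono⟩ := ih
    refine ⟨fun i hi => ?_, fun i j hij hj => ?_⟩
    · have hd : 0 < d := by omega
      obtain ⟨h0, h2⟩ := hbd _ (Nat.mod_lt (b * i) hd)
      have ha : ((b * i / d : ℕ) : ℝ) + 2 ≤ b := by
        exact_mod_cast mul_div_add_two_le_base hdb hi
      rw [truncContent]
      refine ⟨by positivity, ?_⟩
      rw [div_le_iff₀ hβ0]
      linarith
    · rcases hij.eq_or_lt with rfl | hij
      · exact le_rfl
      have hd : 0 < d := by omega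
      have hri := Nat.mod_lt (b * i) hd
      have hrj := Nat.mod_lt (b * j) hd
      rw [truncContent, truncContent]
      gcongr ?_ / β
      rcases le_or_gt (b * i % d) (b * j % d) with hr | hr
      · have h := hmono _ _ hr hrj
        have ha : ((b * i / d : ℕ) : ℝ) + 1 ≤ (b * j / d : ℕ) := by
          exact_mod_cast mul_div_add_one_le hd hdb.le hij
        linarith
      · have ha : ((b * i / d : ℕ) : ℝ) + 2 ≤ (b * j / d : ℕ) := by
          exact_mod_cast mul_div_add_two_le hdb.le hij hr
        linarith [(hbd _ hri).2, (hbd _ hrj).1]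

variable {b d : ℕ} {β : ℝ} {c : ℕ → ℝ}

lemma nonneg_of_longDivision (hβ : 2 ≤ β) (hbβ : (b : ℝ) ≤ 2 * β) (hdb : d < b)
    (hc : ∀ i < d, β * c i = (b * i / d : ℕ) + c (b * i % d)) {i : ℕ} (hi : i < d) :
    0 ≤ c i :=
  ge_of_tendsto' (truncContent_tendsto hβ hc hi)
    fun n => ((truncContent_mem_and_mono hβ hbβ hdb n).1 i hi).1

lemma le_two_of_longDivision (hβ : 2 ≤ β) (hbβ : (b : ℝ) ≤ 2 * β) (hdb : d < b)
    (hc : ∀ i < d, β * c i = (b * i / d : ℕ) + c (b * i % d)) {i : ℕ} (hi : i < d) :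
    c i ≤ 2 :=
  le_of_tendsto' (truncContent_tendsto hβ hc hi)
    fun n => ((truncContent_mem_and_mono hβ hbβ hdb n).1 i hi).2

lemma mono_of_longDivision (hβ : 2 ≤ β) (hbβ : (b : ℝ) ≤ 2 * β) (hdb : d < b)
    (hc : ∀ i < d, β * c i = (b * i / d : ℕ) + c (b * i % d)) {i j : ℕ} (hij : i ≤ j)
    (hj : j < d) : c i ≤ c j :=
  le_of_tendsto_of_tendsto' (truncContent_tendsto hβ hc (hij.trans_lt hj))
    (truncContent_tendsto hβ hc hj)
    fun n => (truncContent_mem_and_mono hβ hbβ hdb n).2 i j hij hj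

lemma pos_of_longDivision (hβ : 2 ≤ β) (hbβ : (b : ℝ) ≤ 2 * β) (hdb : d < b)
    (hc : ∀ i < d, β * c i = (b * i / d : ℕ) + c (b * i % d)) {i : ℕ} (hi0 : 0 < i)
    (hi : i < d) : 0 < c i := by
  have hd : 0 < d := by omega
  have h := nonneg_of_longDivision hβ hbβ hdb hc (Nat.mod_lt (b * i) hd)
  have ha : (1 : ℝ) ≤ (b * i / d : ℕ) := by
    exact_mod_cast (Nat.one_le_div_iff hd).2 (by nlinarith)
  nlinarith [hc i hi]

lemma lt_two_of_longDivision (hβ : 2 ≤ β) (hbβ : (b : ℝ) ≤ 2 * β) (hdb : d < b)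
    (hc : ∀ i < d, β * c i = (b * i / d : ℕ) + c (b * i % d)) {i : ℕ} (hi : i + 2 ≤ d) :
    c i < 2 := by
  have h := le_two_of_longDivision hβ hbβ hdb hc (Nat.mod_lt (b * i) (by omega : 0 < d))
  have ha : ((b * i / d : ℕ) : ℝ) + 3 ≤ b := by
    exact_mod_cast mul_div_add_three_le_base hdb hi
  nlinarith [hc i (by omega)]

lemma lt_succ_of_longDivision (hβ : 2 ≤ β) (hbβ : (b : ℝ) ≤ 2 * β) (hdb : d + 2 ≤ b)
    (hc : ∀ i < d, β * c i = (b * i / d : ℕ) + c (b * i % d)) {i : ℕ} (hi : i + 1 < d) :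
    c i < c (i + 1) := by
  have hd : 0 < d := by omega
  have hdb' : d < b := by omega
  have hri := Nat.mod_lt (b * i) hd
  have hrj := Nat.mod_lt (b * (i + 1)) hd
  have hci := hc i (by omega)
  have hcj := hc (i + 1) hi
  suffices hlt : β * c i < β * c (i + 1) from lt_of_mul_lt_mul_left hlt (by linarith)
  rw [hci, hcj]
  rcases le_or_gt (b * i % d) (b * (i + 1) % d) with hr | hr
  · have h := mono_of_longDivision hβ hbβ hdb' hc hr hrj
    have ha : ((b * i / d : ℕ) : ℝ) + 1 ≤ (b * (i + 1) / d : ℕ) := by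
      exact_mod_cast mul_div_add_one_le hd hdb'.le i.lt_succ_self
    linarith
  have ha := mul_div_add_two_le hdb'.le i.lt_succ_self hr
  have ha' : ((b * i / d : ℕ) : ℝ) + 2 ≤ (b * (i + 1) / d : ℕ) := by exact_mod_cast ha
  have hle := le_two_of_longDivision hβ hbβ hdb' hc hri
  have hge := nonneg_of_longDivision hβ hbβ hdb' hc hrj
  rcases Nat.eq_zero_or_pos (b * (i + 1) % d) with h0 | hpos
  · rcases ha.eq_or_lt with heq | hlt
    · have h1 := Nat.div_add_mod (b * i) d
      have h2 := Nat.div_add_mod (b * (i + 1)) d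
      rw [h0, ← heq, mul_add, mul_add] at h2
      have h := lt_two_of_longDivision hβ hbβ hdb' hc (i := b * i % d) (by omega)
      linarith
    · have hlt' : ((b * i / d : ℕ) : ℝ) + 2 + 1 ≤ (b * (i + 1) / d : ℕ) := by
        exact_mod_cast hlt
      linarith
  · have h := pos_of_longDivision hβ hbβ hdb' hc hpos hrj
    linarith

lemma le_one_of_longDivision {D : ℕ} (hβ : 2 ≤ β) (hbβ : (b : ℝ) ≤ 2 * β) (hdb : d < b)
    (hc : ∀ i < d, β * c i = (b * i / d : ℕ) + c (b * i % d)) (hD : 1 ≤ D) (hDd : D ≤ d)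
    (hβD : β + D = b) : c (d - D) ≤ 1 := by
  have hd : 0 < d := by omega
  have hi : d - D < d := by omega
  have hr := Nat.mod_lt (b * (d - D)) hd
  have hrec := hc _ hi
  have hdm := Nat.div_add_mod (b * (d - D)) d
  set a := b * (d - D) / d
  set r := b * (d - D) % d
  obtain ⟨k, rfl⟩ : ∃ k, d = k + D := ⟨d - D, by omega⟩
  rw [Nat.add_sub_cancel] at *
  have hle := le_two_of_longDivision hβ hbβ hdb hc hr
  have ha : a + D + 1 ≤ b := by
    by_contra! hlt
    have hba : b ≤ a + D := by omega
    nlinarith [Nat.mul_le_mul_left (k + D) hba]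
  rcases ha.eq_or_lt with heq | hlt
  · have hrk : r ≤ k := by
      obtain ⟨e, he⟩ : ∃ e, b = k + D + 1 + e := ⟨b - (k + D + 1), by omega⟩
      have hae : a = k + e := by omega
      rw [he, hae] at hdm
      nlinarith
    have hm := mono_of_longDivision hβ hbβ hdb hc hrk hi
    have heq' : (a : ℝ) + D + 1 = b := by exact_mod_cast heq
    nlinarith
  · have hlt' : (a : ℝ) + D + 1 + 1 ≤ b := by exact_mod_cast hlt
    nlinarith

end LongDivision

/-- Base property of the nilgrowth witness `n ↦ c_{b,β}(n/d)`. -/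
theorem stmt8 (b d D : ℕ) (hD1 : 1 ≤ D) (hDd : D ≤ d) (hdb : d ≤ b)
    (hβ : 2 ≤ b - D)
    (hcase : d = b ∨ d = b - 1 ∨ 2 * D ≤ b) :
    content b (b - D) (((d - D : ℕ) : ℝ) / (d : ℝ)) ≤ content b (b - D) ((d : ℝ) / (d : ℝ)) ∧
    content b (b - D) ((0 : ℝ) / (d : ℝ)) = 0 ∧
    ∀ i : ℕ, i + 1 ≤ d - 1 →
      content b (b - D) ((i : ℝ) / (d : ℝ)) < content b (b - D) (((i : ℝ) + 1) / (d : ℝ)) := by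
  have hd : (d : ℝ) ≠ 0 := by
    have : 0 < d := by omega
    positivity
  rw [div_self hd, content_one (by omega) hβ, zero_div]
  obtain ⟨β, hβb⟩ : ∃ β, b - D = β := ⟨_, rfl⟩
  rw [hβb] at hβ ⊢
  have hβR : (2 : ℝ) ≤ β := by exact_mod_cast hβ
  have hsum : (β : ℝ) + D = b := by exact_mod_cast (by omega : β + D = b)
  set c : ℕ → ℝ := fun i => content b β ((i : ℝ) / d) with hcdef
  have hc : ∀ i < d, (β : ℝ) * c i = (b * i / d : ℕ) + c (b * i % d) :=
    fun i hi => mul_content_div hβ hi (by omega)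
  suffices h : c (d - D) ≤ 1 ∧ ∀ i, i + 1 < d → c i < c (i + 1) by
    refine ⟨h.1, content_zero _ _, fun i hi => ?_⟩
    simpa [hcdef] using h.2 i (by omega)
  have hDd' : ((d - D : ℕ) : ℝ) = d - D := Nat.cast_sub hDd
  by_cases h1 : d = b
  · have hc0 : c 0 = 0 := by simp [hcdef, content_zero]
    have hform : ∀ i < d, (β : ℝ) * c i = i := fun i hi => by
      rw [hc i hi, h1, Nat.mul_div_cancel_left _ (by omega), Nat.mul_mod_right, hc0, add_zero]
    refine ⟨?_, fun i hi => ?_⟩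
    · have h := hform (d - D) (by omega)
      rw [hDd', h1] at h
      rw [h1]
      nlinarith
    · have h := hform i (by omega)
      have h' := hform (i + 1) hi
      push_cast at h'
      nlinarith
  by_cases h2 : d + 1 = b
  · have hform : ∀ i < d, (β : ℝ) * c i = i + c i := fun i hi => by
      have hmul : b * i = i + d * i := by rw [← h2]; ring
      rw [hc i hi, hmul, Nat.add_mul_div_left _ _ (by omega), Nat.add_mul_mod_self_left,
        Nat.mod_eq_of_lt hi, Nat.div_eq_of_lt hi, zero_add]
    have h2' : (d : ℝ) + 1 = b := by exact_mod_cast h2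
    refine ⟨?_, fun i hi => ?_⟩
    · have h := hform (d - D) (by omega)
      rw [hDd'] at h
      nlinarith
    · have h := hform i (by omega)
      have h' := hform (i + 1) hi
      push_cast at h'
      nlinarith
  have hbβ : (b : ℝ) ≤ 2 * β := by exact_mod_cast (by omega : b ≤ 2 * β)
  exact ⟨le_one_of_longDivision hβR hbβ (by omega) hc hD1 hDd hsum,
    fun i hi => lt_succ_of_longDivision hβR hbβ (by omega) hc hi⟩
end

section
/- Let b ≥ 2 and β ≥ 2 be integers. Then for every natural number n ≥ 1, β^{−1}·n^{log_b β} < c_{b,β}(n) < (β·(b−1)/(β−1))·n^{log_b β}. In particular c_{b,β}(n) ≍ n^{log_b β} as n → ∞. -/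
/-- The `(b,β)`-content of a natural number: write `n` in base `b` and read the
digits in base `β`. -/
def contentNat (b β n : ℕ) : ℕ :=
  Nat.ofDigits β (Nat.digits b n)

/-- A string of digits at most `d`, read in base `q + 1`, is bounded by the string of the same
length with all digits equal to `d`. -/
theorem ofDigits_mul_add_le (d q : ℕ) (l : List ℕ) (hl : ∀ x ∈ l, x ≤ d) :
    Nat.ofDigits (q + 1) l * q + d ≤ d * (q + 1) ^ l.length := by
  induction l with
  | nil => simp
  | cons a l ih =>
    have ha : a ≤ d := hl a (by simp)
    have hrec := ih fun x hx => hl x (by simp [hx])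
    rw [Nat.ofDigits_cons, List.length_cons, pow_succ]
    nlinarith [Nat.mul_le_mul_right q ha, Nat.mul_le_mul_right (q + 1) hrec]

/-- Powers of `b` raised to `log_b β` are the corresponding powers of `β`. -/
theorem natCast_pow_rpow_log_div_log {b β : ℕ} (hb : 2 ≤ b) (hβ : 2 ≤ β) (k : ℕ) :
    ((b : ℝ) ^ k) ^ (Real.log β / Real.log b) = (β : ℝ) ^ k := by
  have hb' : (1 : ℝ) < b := by exact_mod_cast hb
  have hβ' : (0 : ℝ) < β := by positivity
  have hbase : (b : ℝ) ^ (Real.log β / Real.log b) = β :=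
    Real.rpow_logb (by linarith) hb'.ne' hβ'
  rw [← Real.rpow_natCast, ← Real.rpow_mul (by linarith), mul_comm,
    Real.rpow_mul (by linarith), hbase, Real.rpow_natCast]

/-- Growth estimate for the `(b,β)`-content function. -/
theorem stmt10 (b β : ℕ) (hb : 2 ≤ b) (hβ : 2 ≤ β) :
    ∀ n : ℕ, 1 ≤ n →
      ((β : ℝ))⁻¹ * (n : ℝ) ^ (Real.log β / Real.log b) < (contentNat b β n : ℝ) ∧
      (contentNat b β n : ℝ) <
        (β : ℝ) * ((b : ℝ) - 1) / ((β : ℝ) - 1) * (n : ℝ) ^ (Real.log β / Real.log b) := by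
  intro n hn
  have hn0 : n ≠ 0 := by omega
  have hb' : (2 : ℝ) ≤ b := by exact_mod_cast hb
  have hβ' : (2 : ℝ) ≤ β := by exact_mod_cast hβ
  set s := Real.log β / Real.log b
  set L := (Nat.digits b n).length
  have hs0 : 0 < s := div_pos (Real.log_pos (by linarith)) (Real.log_pos (by linarith))
  have hpow := natCast_pow_rpow_log_div_log hb hβ
  have hn_lt : (n : ℝ) ^ s < (β : ℝ) ^ L := by
    rw [← hpow L]
    refine Real.rpow_lt_rpow (by positivity) ?_ hs0
    exact_mod_cast Nat.lt_base_pow_length_digits (m := n) hb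
  have hle_n : (β : ℝ) ^ L ≤ β * (n : ℝ) ^ s := by
    have hbase := hpow 1
    rw [pow_one, pow_one] at hbase
    calc (β : ℝ) ^ L = ((b : ℝ) ^ L) ^ s := (hpow L).symm
      _ ≤ ((b : ℝ) * n) ^ s := by
        refine Real.rpow_le_rpow (by positivity) ?_ hs0.le
        exact_mod_cast Nat.base_pow_length_digits_le b n hb hn0
      _ = β * (n : ℝ) ^ s := by
        rw [Real.mul_rpow (by positivity) (by positivity), hbase]
  have hlower : (β : ℝ) ^ L ≤ β * contentNat b β n := by
    obtain ⟨q, rfl⟩ := Nat.exists_eq_add_of_le' hβ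
    exact_mod_cast Nat.pow_length_le_mul_ofDigits
      (Nat.digits_ne_nil_iff_ne_zero.mpr hn0) (Nat.getLast_digit_ne_zero b hn0)
  have hupper : (contentNat b β n : ℝ) * (β - 1) + (b - 1) ≤ (b - 1) * (β : ℝ) ^ L := by
    have h := ofDigits_mul_add_le (b - 1) (β - 1) (Nat.digits b n)
      fun x hx => Nat.le_pred_of_lt (Nat.digits_lt_base hb hx)
    rw [Nat.sub_add_cancel (by omega)] at h
    have h' := (Nat.cast_le (α := ℝ)).mpr h
    push_cast [Nat.cast_sub (show 1 ≤ b by omega), Nat.cast_sub (show 1 ≤ β by omega)] at h'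
    rwa [contentNat, Nat.coe_ofDigits]
  constructor
  · rw [inv_mul_lt_iff₀ (by linarith)]
    exact hn_lt.trans_le hlower
  · rw [div_mul_eq_mul_div, lt_div_iff₀ (by linarith)]
    nlinarith [mul_le_mul_of_nonneg_left hle_n (show (0 : ℝ) ≤ b - 1 by linarith)]
end
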